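/- Let μ and ν be compactly supported probability measures on ℝ with μ nondegenerate (not a point mass), and let ρ be a free additive convolution of μ and ν. Then for every real z < z*_ρ one has U_ρ(z) = inf{ E_{μ,ν,z}(g) : g ∈ Ê_{μ,ν,z} and 0 < g < g*_ρ }; moreover this infimum is attained at g = G_ρ(z), which lies in Ê_{μ,ν,z} ∩ (0, g*_ρ), and at no other point of that set. -/

import Mathlib

/-!
Write `K_τ` for the inverse of `G_τ` on `(0, G_τ(a_τ))`, and `w(g) = z - R̂_μ(-g)`. The integral
`∫₀^g s R̂_μ'(-s) ds` has the closed form `J_μ(g) = log g + ∫ log (λ - K_μ(g)) dμ`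
(`integral_Rhat`), because `J_μ'(g) = g R̂_μ'(-g)` and `J_μ(0+) = 0`. Hence
`E'(g) = R̂_μ'(-g) (g - G_ν(w(g)))`. Here `R̂_μ' > 0` by the strict variance inequality
`G_μ² < G_μ'`, valid since `μ` is not a point mass. If `K_ρ = K_μ + K_ν + 1/g`, then
`K_ν(g) - w(g) = K_ρ(g) - z`, so `g - G_ν(w(g))` has the sign of `g - G_ρ(z)`: `E` decreases strictly
up to `G_ρ(z)` and increases strictly afterwards. The minimum value is `U_ρ(z)` because `J_ρ` equals
`J_μ + J_ν` (`Jfun_add`).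

The hypothesis gives `K_ρ = K_μ + K_ν + 1/g` only near `0`, and the main difficulty is to have it on
all of `(0, G_ρ(a_ρ))`; in particular `G_ρ(a_ρ) ≤ G_μ(a_μ)` and `G_ρ(a_ρ) ≤ G_ν(a_ν)` must be shown
(`gRange_subset`). Where they are defined, the subordination functions `ω₁ = K_μ ∘ G_ρ` and
`ω₂ = K_ν ∘ G_ρ` satisfy `ω₁ = z + h_ν(ω₂)` and `ω₂ = z + h_μ(ω₁)`, where `h_τ(w) = -1/G_τ(w) - w`.

* By Kaluza's theorem on reciprocals of power series with log-convex coefficients, `h_μ'` and `h_ν'`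
  are absolutely monotone to the left of the supports (`NN_hderiv`).
* Solving the differentiated system for `ω₁'`, absolute monotonicity passes to `ω₁' - 1`
  (`subord_NN`). Since `G_ρ = G_μ ∘ ω₁`, every derivative of `G_ρ` at `z` is at least the
  corresponding derivative of `G_μ` at `ω₁(z)` (`comp_dominated`, `mom_subord_le`).
* The growth rate of the derivatives is the inverse of the distance to the support, so
  `a_ρ - z ≤ a_μ - ω₁(z)` (`subord_dist`). Thus `G_ρ(z) ≤ G_μ(a_μ - (a_ρ - z))`, an inequality that
  survives in the limit, and the domain of `ω₁` and `ω₂` is relatively closed, as well as open, in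
  `(-∞, a_ρ)`.
-/

open MeasureTheory Filter Set

noncomputable section

/-- The topological support of a Borel measure on `ℝ`. -/
def msupp (μ : Measure ℝ) : Set ℝ := {x : ℝ | ∀ U ∈ nhds x, μ U ≠ 0}

/-- Compact support: some compact set has full measure. -/
def HasCompactSupp (μ : Measure ℝ) : Prop := ∃ K : Set ℝ, IsCompact K ∧ μ K = 1

/-- `a_μ`, the infimum of the support. -/
def aInf (μ : Measure ℝ) : ℝ := sInf (msupp μ)

/-- `b_μ`, the supremum of the support. -/
def bSup (μ : Measure ℝ) : ℝ := sSup (msupp μ)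

/-- The (real) Stieltjes transform `G_μ(z) = ∫ (λ - z)⁻¹ dμ(λ)`. -/
def Gst (μ : Measure ℝ) (z : ℝ) : ℝ := ∫ l, (l - z)⁻¹ ∂μ

/-- `G_μ(a_μ) = lim_{z ↑ a_μ} G_μ(z) ∈ (0,∞]`, as the supremum (in `EReal`) of the values of
`G_μ` on `(-∞, a_μ)` (the two agree since `G_μ` is increasing there). -/
def GaSup (μ : Measure ℝ) : EReal :=
  sSup ((fun z => ((Gst μ z : ℝ) : EReal)) '' Set.Iio (aInf μ))

/-- `G_μ(b_μ) = lim_{z ↓ b_μ} G_μ(z) ∈ [-∞,0)`, as the infimum (in `EReal`) of the values of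
`G_μ` on `(b_μ, ∞)` (the two agree since `G_μ` is increasing there). -/
def GbInf (μ : Measure ℝ) : EReal :=
  sInf ((fun z => ((Gst μ z : ℝ) : EReal)) '' Set.Ioi (bSup μ))

/-- The interval `D̂_μ = (-G_μ(a_μ), -G_μ(b_μ)) ⊆ ℝ`. -/
def Dhat (μ : Measure ℝ) : Set ℝ :=
  {u : ℝ | -(GaSup μ) < (u : EReal) ∧ (u : EReal) < -(GbInf μ)}

/-- The inverse `G_μ^⟨-1⟩` of the restriction of `G_μ` to `ℝ ∖ [a_μ, b_μ]`. -/
def Ginv (μ : Measure ℝ) (g : ℝ) : ℝ :=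
  Function.invFunOn (Gst μ) (Set.Iio (aInf μ) ∪ Set.Ioi (bSup μ)) g

/-- The real `R`-transform `R̂_μ(u) = G_μ^⟨-1⟩(-u) - u⁻¹`, meaningful for `u ∈ D̂_μ ∖ {0}`. -/
def Rhat (μ : Measure ℝ) (u : ℝ) : ℝ := Ginv μ (-u) - u⁻¹

/-- `ρ` is a free additive convolution of `μ` and `ν`. -/
def IsFreeAdd (μ ν ρ : Measure ℝ) : Prop :=
  IsProbabilityMeasure ρ ∧ HasCompactSupp ρ ∧
  ∃ ε > (0 : ℝ), ∀ u : ℝ, u ∈ Set.Ioo (-ε) ε → u ≠ 0 →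
    u ∈ Dhat ρ ∧ u ∈ Dhat μ ∧ u ∈ Dhat ν ∧ Rhat ρ u = Rhat μ u + Rhat ν u

/-- `μ` is nondegenerate: not a point mass. -/
def Nondeg (μ : Measure ℝ) : Prop := ¬ ∃ c : ℝ, μ = Measure.dirac c

/-- The logarithmic potential `U_ρ(z) = ∫ log |z - λ| dρ(λ)`. -/
def Upot (ρ : Measure ℝ) (z : ℝ) : ℝ := ∫ l, Real.log |z - l| ∂ρ

/-- `E_{μ,ν,z}(g) = ∫₀^g s R̂_μ'(-s) ds + ∫ log (λ - z + R̂_μ(-g)) dν(λ)`. -/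
def Efun (μ ν : Measure ℝ) (z : ℝ) (g : ℝ) : ℝ :=
  (∫ s in (0:ℝ)..g, s * deriv (Rhat μ) (-s)) + ∫ l, Real.log (l - z + Rhat μ (-g)) ∂ν

/-- The domain `Ê_{μ,ν,z}` of `E_{μ,ν,z}`. -/
def Ehat (μ ν : Measure ℝ) (z : ℝ) : Set ℝ :=
  {g : ℝ | -g ∈ Dhat μ ∧ g ≠ 0 ∧ z - Rhat μ (-g) < aInf ν}

/-- `F̂_{μ,ν}(h) = R̂_μ(-G_ν(h)) + h`. -/
def Fhat (μ ν : Measure ℝ) (h : ℝ) : ℝ := Rhat μ (-(Gst ν h)) + h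

/-- The domain of `F̂_{μ,ν}`. -/
def FhatDom (μ ν : Measure ℝ) : Set ℝ := {h : ℝ | h < aInf ν ∧ -(Gst ν h) ∈ Dhat μ}

/-- `Ĥ_{μ,ν}`: points of the domain to the left of which `F̂_{μ,ν}'` is positive. -/
def Hhat (μ ν : Measure ℝ) : Set ℝ :=
  {h : ℝ | h ∈ FhatDom μ ν ∧ ∀ t ∈ FhatDom μ ν, t < h → 0 < deriv (Fhat μ ν) t}

/-- `h*_{μ,ν} = sup Ĥ_{μ,ν}`. -/
def hstar (μ ν : Measure ℝ) : ℝ := sSup (Hhat μ ν)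

end

/-! ### Kernel moments and the logarithmic integral -/

lemma msupp_eq_support (μ : Measure ℝ) : msupp μ = μ.support := by
  ext x
  simp [msupp, Measure.mem_support_iff_forall, pos_iff_ne_zero]

/-- `μ` is concentrated on `[a, b]` and charges every neighbourhood of `a`. All that is used of a
compactly supported measure is `Bounds μ (aInf μ) (bSup μ)`. -/
structure Bounds (μ : Measure ℝ) (a b : ℝ) : Prop where
  lo : ∀ᵐ l ∂μ, a ≤ l
  hi : ∀ᵐ l ∂μ, l ≤ b
  mass : ∀ η > 0, 0 < μ (Iio (a + η))

lemma bounds_of_compact {μ : Measure ℝ} [IsProbabilityMeasure μ] (h : HasCompactSupp μ) :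
    Bounds μ (aInf μ) (bSup μ) := by
  obtain ⟨K, hK, hK1⟩ := h
  have hKae : K ∈ ae μ := by
    rw [mem_ae_iff]
    exact (prob_compl_eq_zero_iff hK.measurableSet).2 hK1
  have hsub : μ.support ⊆ K := Measure.support_subset_of_isClosed hK.isClosed hKae
  have hcomp : IsCompact μ.support := hK.of_isClosed_subset Measure.isClosed_support hsub
  have hne : μ.support.Nonempty := Measure.nonempty_support (IsProbabilityMeasure.ne_zero μ)
  have hae : ∀ᵐ l ∂μ, l ∈ μ.support := Measure.support_mem_ae
  unfold aInf bSup
  rw [msupp_eq_support]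
  refine ⟨?_, ?_, ?_⟩
  · filter_upwards [hae] with l hl using csInf_le hcomp.bddBelow hl
  · filter_upwards [hae] with l hl using le_csSup hcomp.bddAbove hl
  · intro η hη
    exact (Measure.mem_support_iff_forall _).1 (hcomp.sInf_mem hne) _ (Iio_mem_nhds (by linarith))

/-- The kernel moments `p_n(w) = ∫ (λ - w)^{-(n+1)} dμ(λ)`, i.e. the Taylor coefficients of the
Stieltjes transform at `w`; `p_0` is the Stieltjes transform itself. -/
noncomputable def mom (μ : Measure ℝ) (n : ℕ) (w : ℝ) : ℝ := ∫ l, ((l - w)⁻¹) ^ (n + 1) ∂μ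

lemma Gst_eq_mom (μ : Measure ℝ) : Gst μ = mom μ 0 := by
  ext w; simp [Gst, mom]

section
variable {μ : Measure ℝ} [IsProbabilityMeasure μ] {a b : ℝ} (hB : Bounds μ a b)
include hB

lemma Bounds.le : a ≤ b := by
  obtain ⟨l, h1, h2⟩ := (hB.lo.and hB.hi).exists
  linarith

lemma integrable_inv_pow {w : ℝ} (hw : w < a) (n : ℕ) :
    Integrable (fun l => ((l - w)⁻¹) ^ n) μ := by
  refine Integrable.mono' (integrable_const (((a - w)⁻¹) ^ n)) (by fun_prop) ?_
  filter_upwards [hB.lo] with l hl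
  have h1 : 0 < a - w := by linarith
  have h2 : 0 < l - w := by linarith
  rw [Real.norm_of_nonneg (by positivity)]
  gcongr

lemma mom_pos {w : ℝ} (hw : w < a) (n : ℕ) : 0 < mom μ n w := by
  have hint := integrable_inv_pow hB hw (n + 1)
  have hpos : 0 ≤ᵐ[μ] fun l => ((l - w)⁻¹) ^ (n + 1) := by
    filter_upwards [hB.lo] with l hl
    have h2 : 0 < l - w := by linarith
    simp only [Pi.zero_apply]; positivity
  refine lt_of_le_of_ne (integral_nonneg_of_ae hpos) fun h => ?_
  have h0 := (integral_eq_zero_iff_of_nonneg_ae hpos hint).1 h.symm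
  obtain ⟨l, h1, h2⟩ := (hB.lo.and h0).exists
  have h2' : 0 < l - w := by linarith
  have : 0 < ((l - w)⁻¹) ^ (n + 1) := by positivity
  simp only [Pi.zero_apply] at h2
  linarith

lemma mom_le {w : ℝ} (hw : w < a) (n : ℕ) : mom μ n w ≤ ((a - w)⁻¹) ^ (n + 1) := by
  have h : mom μ n w ≤ ∫ _l, ((a - w)⁻¹) ^ (n + 1) ∂μ := by
    refine integral_mono_ae (integrable_inv_pow hB hw _) (integrable_const _) ?_
    filter_upwards [hB.lo] with l hl
    have h1 : 0 < a - w := by linarith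
    have h2 : 0 < l - w := by linarith
    gcongr
  simpa using h

lemma le_mom {w : ℝ} (hw : w < a) (n : ℕ) : ((b - w)⁻¹) ^ (n + 1) ≤ mom μ n w := by
  have h : ∫ _l, ((b - w)⁻¹) ^ (n + 1) ∂μ ≤ mom μ n w := by
    refine integral_mono_ae (integrable_const _) (integrable_inv_pow hB hw _) ?_
    filter_upwards [hB.lo, hB.hi] with l hl hl'
    have h1 : 0 < b - w := by linarith
    have h2 : 0 < l - w := by linarith
    gcongr
  simpa using h

/-- Mass near the left edge forces geometric growth of the kernel moments. -/
lemma mass_le_mom {w η : ℝ} (hw : w < a) (hη : 0 < η) (n : ℕ) :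
    μ.real (Iio (a + η)) * ((a + η - w)⁻¹) ^ (n + 1) ≤ mom μ n w := by
  have h : ∫ _l in Iio (a + η), ((a + η - w)⁻¹) ^ (n + 1) ∂μ ≤ mom μ n w := by
    have hint := integrable_inv_pow hB hw (n + 1)
    refine le_trans (b := ∫ l in Iio (a + η), ((l - w)⁻¹) ^ (n + 1) ∂μ) ?_ ?_
    · refine setIntegral_mono_ae_restrict (integrable_const _).integrableOn hint.integrableOn ?_
      rw [EventuallyLE, ae_restrict_iff' measurableSet_Iio]
      filter_upwards [hB.lo] with l hl hl'
      have hl'' : l < a + η := hl'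
      have h1 : 0 < a + η - w := by linarith
      have h2 : 0 < l - w := by linarith
      gcongr
    · refine setIntegral_le_integral hint ?_
      filter_upwards [hB.lo] with l hl
      have h2 : 0 < l - w := by linarith
      simp only [Pi.zero_apply]; positivity
  simpa [Measure.real] using h

lemma hasDerivAt_mom {w : ℝ} (hw : w < a) (n : ℕ) :
    HasDerivAt (mom μ n) ((n + 1) * mom μ (n + 1) w) w := by
  have hm : (w + a) / 2 < a := by linarith
  have hs : Iio ((w + a) / 2) ∈ nhds w := Iio_mem_nhds (by linarith)
  have key := (hasDerivAt_integral_of_dominated_loc_of_deriv_le (μ := μ) (𝕜 := ℝ)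
    (F := fun w l => ((l - w)⁻¹) ^ (n + 1))
    (F' := fun w l => (n + 1 : ℝ) * ((l - w)⁻¹) ^ (n + 2))
    (bound := fun l => (n + 1 : ℝ) * ((l - (w + a) / 2)⁻¹) ^ (n + 2)) hs
    (Eventually.of_forall fun x => by fun_prop) (integrable_inv_pow hB hw _) (by fun_prop) ?_
    ((integrable_inv_pow hB hm _).const_mul _) ?_).2
  · rw [integral_const_mul] at key
    exact key
  · filter_upwards [hB.lo] with l hl x hx
    have hx' : x < (w + a) / 2 := hx
    have h1 : 0 < l - x := by linarith
    have h2 : 0 < l - (w + a) / 2 := by linarith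
    rw [Real.norm_of_nonneg (by positivity)]
    gcongr
  · filter_upwards [hB.lo] with l hl x hx
    have hx' : x < (w + a) / 2 := hx
    have h1 : l - x ≠ 0 := by intro h; linarith
    have h2 : HasDerivAt (fun x => l - x) (-1) x := by simpa using (hasDerivAt_id x).const_sub l
    convert! (h2.inv h1).pow (n + 1) using 1
    simp only [Nat.add_sub_cancel]
    simp only [Pi.inv_apply]
    push_cast
    rw [pow_add]
    field_simp

lemma integrable_log {w : ℝ} (hw : w < a) : Integrable (fun l => Real.log (l - w)) μ := by
  refine Integrable.mono' (integrable_const (|Real.log (a - w)| + |Real.log (b - w)|))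
    (Real.measurable_log.comp (measurable_id.sub_const w)).aestronglyMeasurable ?_
  filter_upwards [hB.lo, hB.hi] with l hl hl'
  have h1 : Real.log (a - w) ≤ Real.log (l - w) := Real.log_le_log (by linarith) (by linarith)
  have h2 : Real.log (l - w) ≤ Real.log (b - w) := Real.log_le_log (by linarith) (by linarith)
  rw [Real.norm_eq_abs]
  rcases abs_cases (Real.log (l - w)) with h | h <;>
  rcases abs_cases (Real.log (a - w)) with h' | h' <;>
  rcases abs_cases (Real.log (b - w)) with h'' | h'' <;> linarith

lemma hasDerivAt_logint {w : ℝ} (hw : w < a) :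
    HasDerivAt (fun w => ∫ l, Real.log (l - w) ∂μ) (- mom μ 0 w) w := by
  have hm : (w + a) / 2 < a := by linarith
  have hs : Iio ((w + a) / 2) ∈ nhds w := Iio_mem_nhds (by linarith)
  have key := (hasDerivAt_integral_of_dominated_loc_of_deriv_le (μ := μ) (𝕜 := ℝ)
    (F := fun w l => Real.log (l - w))
    (F' := fun w l => - ((l - w)⁻¹) ^ (0 + 1))
    (bound := fun l => ((l - (w + a) / 2)⁻¹) ^ (0 + 1)) hs
    (Eventually.of_forall fun x =>
      (Real.measurable_log.comp (measurable_id.sub_const x)).aestronglyMeasurable)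
    (integrable_log hB hw) (by fun_prop) ?_
    (integrable_inv_pow hB hm _) ?_).2
  · rw [integral_neg] at key
    exact key
  · filter_upwards [hB.lo] with l hl x hx
    have hx' : x < (w + a) / 2 := hx
    have h1 : 0 < l - x := by linarith
    have h2 : 0 < l - (w + a) / 2 := by linarith
    rw [norm_neg, Real.norm_of_nonneg (by positivity)]
    gcongr
  · filter_upwards [hB.lo] with l hl x hx
    have hx' : x < (w + a) / 2 := hx
    have h1 : l - x ≠ 0 := by intro h; linarith
    have h2 : HasDerivAt (fun x => l - x) (-1) x := by simpa using (hasDerivAt_id x).const_sub l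
    convert! h2.log h1 using 1
    simp [div_eq_mul_inv]

/-- Chebyshev-type inequality; it expresses the log-convexity of the kernel moments. -/
lemma mom_logconvex {w : ℝ} (hw : w < a) (m j : ℕ) :
    mom μ (m + j) w * mom μ (m + 1) w ≤ mom μ (m + j + 1) w * mom μ m w := by
  have hm := mom_pos hB hw m
  set c := mom μ (m + 1) w / mom μ m w with hc
  have hc0 : 0 ≤ c := div_nonneg (mom_pos hB hw _).le hm.le
  have h : 0 ≤ ∫ l, (((l - w)⁻¹) ^ (m + j + 1 + 1) - c * ((l - w)⁻¹) ^ (m + j + 1)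
      - (c ^ j * ((l - w)⁻¹) ^ (m + 1 + 1) - c ^ j * c * ((l - w)⁻¹) ^ (m + 1))) ∂μ := by
    refine integral_nonneg_of_ae ?_
    filter_upwards [hB.lo] with l hl
    have h2 : 0 < (l - w)⁻¹ := inv_pos.2 (by linarith)
    set x := (l - w)⁻¹
    have h3 : 0 ≤ (x ^ j - c ^ j) * (x - c) := by
      rcases le_total x c with h | h
      · exact mul_nonneg_of_nonpos_of_nonpos (sub_nonpos.2 (pow_le_pow_left₀ h2.le h j))
          (sub_nonpos.2 h)
      · exact mul_nonneg (sub_nonneg.2 (pow_le_pow_left₀ hc0 h j)) (sub_nonneg.2 h)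
    have h4 : 0 ≤ x ^ (m + 1) * ((x ^ j - c ^ j) * (x - c)) := by positivity
    simp only [Pi.zero_apply]
    refine h4.trans (le_of_eq ?_)
    ring
  have hi := fun n => integrable_inv_pow hB hw n
  have i1 : Integrable (fun l => ((l - w)⁻¹) ^ (m + j + 1 + 1) - c * ((l - w)⁻¹) ^ (m + j + 1)) μ :=
    (hi _).sub ((hi _).const_mul _)
  have i2 : Integrable (fun l => c ^ j * ((l - w)⁻¹) ^ (m + 1 + 1)
      - c ^ j * c * ((l - w)⁻¹) ^ (m + 1)) μ := ((hi _).const_mul _).sub ((hi _).const_mul _)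
  rw [integral_sub i1 i2,
    integral_sub (hi _) ((hi _).const_mul _), integral_sub ((hi _).const_mul _) ((hi _).const_mul _),
    integral_const_mul, integral_const_mul, integral_const_mul] at h
  change 0 ≤ mom μ (m + j + 1) w - c * mom μ (m + j) w
    - (c ^ j * mom μ (m + 1) w - c ^ j * c * mom μ m w) at h
  have h5 : c * mom μ m w = mom μ (m + 1) w := by rw [hc]; field_simp
  have h6 : c ^ j * mom μ (m + 1) w - c ^ j * c * mom μ m w = 0 := by rw [← h5]; ring
  rw [h6, sub_zero] at h
  rw [← h5]
  nlinarith [mul_nonneg h hm.le]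

lemma integrable_variance {w : ℝ} (hw : w < a) (c : ℝ) :
    Integrable (fun l => ((l - w)⁻¹ - c) ^ 2) μ := by
  have hi := fun n => integrable_inv_pow hB hw n
  convert! (hi 2).sub (((hi 1).const_mul (2 * c)).sub (integrable_const (c ^ 2))) using 1
  ext l
  simp only [Pi.sub_apply]
  ring

lemma variance_eq {w : ℝ} (hw : w < a) :
    ∫ l, ((l - w)⁻¹ - mom μ 0 w) ^ 2 ∂μ = mom μ 1 w - mom μ 0 w ^ 2 := by
  have hi := fun n => integrable_inv_pow hB hw n
  set c := mom μ 0 w with hc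
  have i2 : Integrable (fun l => 2 * c * ((l - w)⁻¹) ^ (0 + 1) - c ^ 2) μ :=
    ((hi _).const_mul _).sub (integrable_const _)
  have h1 : ∀ l, ((l - w)⁻¹ - c) ^ 2 =
      ((l - w)⁻¹) ^ (1 + 1) - (2 * c * ((l - w)⁻¹) ^ (0 + 1) - c ^ 2) := fun l => by ring
  simp only [h1]
  rw [integral_sub (hi _) i2, integral_sub ((hi _).const_mul _) (integrable_const _),
    integral_const_mul]
  change mom μ 1 w - (2 * c * mom μ 0 w - _) = _
  rw [← hc]
  simp
  ring

/-- Variance inequality `G² ≤ G'`. -/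
lemma sq_mom_zero_le {w : ℝ} (hw : w < a) : mom μ 0 w ^ 2 ≤ mom μ 1 w := by
  have h := variance_eq hB hw
  have h2 : 0 ≤ ∫ l, ((l - w)⁻¹ - mom μ 0 w) ^ 2 ∂μ := integral_nonneg fun l => sq_nonneg _
  linarith

/-- The variance inequality is strict unless the measure is a point mass. -/
lemma sq_mom_zero_lt (hnd : Nondeg μ) {w : ℝ} (hw : w < a) : mom μ 0 w ^ 2 < mom μ 1 w := by
  refine lt_of_le_of_ne (sq_mom_zero_le hB hw) fun heq => hnd ?_
  set c := mom μ 0 w with hc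
  have h : ∫ l, ((l - w)⁻¹ - c) ^ 2 ∂μ = 0 := by
    rw [hc, variance_eq hB hw]; linarith
  have h0 := (integral_eq_zero_iff_of_nonneg (fun l => sq_nonneg _)
    (integrable_variance hB hw c)).1 h
  have hc0 : 0 < c := mom_pos hB hw 0
  have hae : ∀ᵐ l ∂μ, l = w + c⁻¹ := by
    filter_upwards [h0] with l hl
    simp only [Pi.zero_apply] at hl
    have h3 : (l - w)⁻¹ = c := sub_eq_zero.1 ((pow_eq_zero_iff two_ne_zero).1 hl)
    rw [← h3]; simp
  refine ⟨w + c⁻¹, ?_⟩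
  ext s hs
  rw [Measure.dirac_apply' _ hs]
  by_cases hmem : w + c⁻¹ ∈ s
  · simp only [hmem, indicator_of_mem, Pi.one_apply]
    rw [← measure_univ (μ := μ)]
    refine measure_congr ?_
    filter_upwards [hae] with l hl
    exact propext ⟨fun _ => trivial, fun _ => hl ▸ hmem⟩
  · simp only [hmem, not_false_eq_true, indicator_of_notMem]
    rw [measure_eq_zero_iff_ae_notMem]
    filter_upwards [hae] with l hl
    rw [hl]; exact hmem

lemma analyticAt_mom_zero {w : ℝ} (hw : w < a) : AnalyticAt ℝ (mom μ 0) w := by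
  refine ⟨FormalMultilinearSeries.ofScalars ℝ (fun n => mom μ n w), ?_⟩
  rw [hasFPowerSeriesAt_iff]
  have hr : 0 < a - w := by linarith
  filter_upwards [Metric.ball_mem_nhds (0 : ℝ) hr] with s hs
  have hs' : |s| < a - w := by simpa using hs
  have hi := fun n => integrable_inv_pow hB hw n
  have hq : |s| / (a - w) < 1 := (div_lt_one hr).2 hs'
  have hsum := hasSum_integral_of_summable_integral_norm (μ := μ)
    (F := fun (n : ℕ) l => s ^ n * ((l - w)⁻¹) ^ (n + 1)) (fun n => (hi _).const_mul _) (by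
      refine Summable.of_nonneg_of_le (fun n => integral_nonneg fun l => norm_nonneg _) (fun n => ?_)
        ((summable_geometric_of_lt_one (by positivity) hq).mul_right ((a - w)⁻¹))
      calc ∫ l, ‖s ^ n * ((l - w)⁻¹) ^ (n + 1)‖ ∂μ ≤ ∫ _l, (|s| / (a - w)) ^ n * (a - w)⁻¹ ∂μ := by
            refine integral_mono_ae ((hi _).const_mul _).norm (integrable_const _) ?_
            filter_upwards [hB.lo] with l hl
            have h2 : 0 < l - w := by linarith
            rw [norm_mul, norm_pow, Real.norm_eq_abs, Real.norm_of_nonneg (by positivity),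
              div_pow, div_eq_mul_inv, mul_assoc, ← inv_pow, ← pow_succ]
            gcongr
        _ = _ := by simp)
  have hpt : ∫ l, ∑' n : ℕ, s ^ n * ((l - w)⁻¹) ^ (n + 1) ∂μ = mom μ 0 (w + s) := by
    refine integral_congr_ae ?_
    filter_upwards [hB.lo] with l hl
    have h2 : 0 < l - w := by linarith
    have h3 : |s| < l - w := by linarith
    have h4 : 0 < l - (w + s) := by linarith [le_abs_self s]
    have hg := hasSum_geometric_of_abs_lt_one (r := s / (l - w)) (by
      rw [abs_div, abs_of_pos h2]; exact (div_lt_one h2).2 h3)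
    have hg2 := hg.mul_right ((l - w)⁻¹)
    have h5 : ∀ n : ℕ, s ^ n * ((l - w)⁻¹) ^ (n + 1) = (s / (l - w)) ^ n * (l - w)⁻¹ := by
      intro n; rw [pow_succ, div_eq_mul_inv, mul_pow, mul_assoc]
    simp only [h5]
    rw [hg2.tsum_eq]
    have h6 : 1 - s / (l - w) = (l - (w + s)) / (l - w) := by field_simp; ring
    rw [h6, inv_div, zero_add, pow_one]
    field_simp
  rw [hpt] at hsum
  convert! hsum using 2 with n
  rw [integral_const_mul, FormalMultilinearSeries.coeff_ofScalars, smul_eq_mul, mom]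

end

/-! ### Absolutely monotone functions and the reciprocal Stieltjes transform -/

/-- `NN I n f` says that `f` and its derivatives of order at most `n` exist and are nonnegative on
the (open) set `I`. Functions with `NN I n f` for all `n` are the absolutely monotone ones. -/
def NN (I : Set ℝ) : ℕ → (ℝ → ℝ) → Prop
  | 0, f => ∀ x ∈ I, 0 ≤ f x
  | n + 1, f => (∀ x ∈ I, 0 ≤ f x) ∧ (∀ x ∈ I, DifferentiableAt ℝ f x) ∧ NN I n (deriv f)

section
variable {I : Set ℝ}

lemma NN.nonneg {n : ℕ} {f : ℝ → ℝ} (h : NN I n f) : ∀ x ∈ I, 0 ≤ f x := by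
  cases n with
  | zero => exact h
  | succ n => exact h.1

lemma NN.pred {n : ℕ} {f : ℝ → ℝ} (h : NN I (n + 1) f) : NN I n f := by
  induction n generalizing f with
  | zero => exact h.1
  | succ n ih => exact ⟨h.1, h.2.1, ih h.2.2⟩

lemma NN.congr (hI : IsOpen I) {n : ℕ} {f g : ℝ → ℝ} (h : NN I n f) (hfg : EqOn f g I) :
    NN I n g := by
  induction n generalizing f g with
  | zero => exact fun x hx => hfg hx ▸ h x hx
  | succ n ih =>
    refine ⟨fun x hx => hfg hx ▸ h.1 x hx, fun x hx => ?_, ih h.2.2 fun x hx => ?_⟩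
    · exact (h.2.1 x hx).congr_of_eventuallyEq (hfg.eventuallyEq_of_mem (hI.mem_nhds hx)).symm
    · exact (hfg.eventuallyEq_of_mem (hI.mem_nhds hx)).deriv_eq

lemma NN.of_hasDerivAt (hI : IsOpen I) {n : ℕ} {f f' : ℝ → ℝ} (h0 : ∀ x ∈ I, 0 ≤ f x)
    (hd : ∀ x ∈ I, HasDerivAt f (f' x) x) (h : NN I n f') : NN I (n + 1) f :=
  ⟨h0, fun x hx => (hd x hx).differentiableAt, h.congr hI fun x hx => (hd x hx).deriv.symm⟩

lemma NN.zero (hI : IsOpen I) (n : ℕ) : NN I n (fun _ => 0) := by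
  induction n with
  | zero => exact fun _ _ => le_rfl
  | succ n ih => exact .of_hasDerivAt hI (fun _ _ => le_rfl) (fun x _ => hasDerivAt_const x 0) ih

lemma NN.const (hI : IsOpen I) (n : ℕ) {c : ℝ} (hc : 0 ≤ c) : NN I n (fun _ => c) := by
  cases n with
  | zero => exact fun _ _ => hc
  | succ n => exact .of_hasDerivAt hI (fun _ _ => hc) (fun x _ => hasDerivAt_const x c) (.zero hI n)

lemma NN.add (hI : IsOpen I) {n : ℕ} {f g : ℝ → ℝ} (hf : NN I n f) (hg : NN I n g) :
    NN I n (fun x => f x + g x) := by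
  induction n generalizing f g with
  | zero => exact fun x hx => add_nonneg (hf x hx) (hg x hx)
  | succ n ih =>
    exact .of_hasDerivAt hI (fun x hx => add_nonneg (hf.1 x hx) (hg.1 x hx))
      (fun x hx => (hf.2.1 x hx).hasDerivAt.add (hg.2.1 x hx).hasDerivAt) (ih hf.2.2 hg.2.2)

lemma NN.mul (hI : IsOpen I) {n : ℕ} {f g : ℝ → ℝ} (hf : NN I n f) (hg : NN I n g) :
    NN I n (fun x => f x * g x) := by
  induction n generalizing f g with
  | zero => exact fun x hx => mul_nonneg (hf x hx) (hg x hx)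
  | succ n ih =>
    exact .of_hasDerivAt hI (fun x hx => mul_nonneg (hf.1 x hx) (hg.1 x hx))
      (fun x hx => (hf.2.1 x hx).hasDerivAt.mul (hg.2.1 x hx).hasDerivAt)
      (.add hI (ih hf.2.2 hg.pred) (ih hf.pred hg.2.2))

/-- The geometric series `1 / (1 - p)` inherits nonnegative derivatives from `p`. -/
lemma NN.inv_one_sub (hI : IsOpen I) {n : ℕ} {p : ℝ → ℝ} (hp : NN I n p)
    (h1 : ∀ x ∈ I, p x < 1) : NN I n (fun x => (1 - p x)⁻¹) := by
  have h0 : ∀ x ∈ I, 0 ≤ (1 - p x)⁻¹ := fun x hx => inv_nonneg.2 (by linarith [h1 x hx])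
  induction n with
  | zero => exact h0
  | succ n ih =>
    have hn := ih hp.pred
    refine .of_hasDerivAt hI h0 (f' := fun x => deriv p x * ((1 - p x)⁻¹ * (1 - p x)⁻¹))
      (fun x hx => ?_) (.mul hI hp.2.2 (.mul hI hn hn))
    have hne : 1 - p x ≠ 0 := by intro h; linarith [h1 x hx]
    convert! ((hp.2.1 x hx).hasDerivAt.const_sub 1).inv hne using 1
    field_simp

/-- Absolute monotonicity propagates through a pair of functions solving the subordination system
`ω₁' = 1 + B(ω₂) ω₂'`, `ω₂' = 1 + A(ω₁) ω₁'` with `A`, `B` absolutely monotone: solving the linear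
system gives `ω₁' = (1 + B(ω₂)) / (1 - B(ω₂) A(ω₁))`, so `n` nonnegative derivatives of the
compositions give `n` nonnegative derivatives of `ω₁'`, and then `n + 1` of the compositions. -/
lemma subord_NN {J₁ J₂ : Set ℝ} (hI : IsOpen I) {ω₁ ω₂ d₁ d₂ A B : ℝ → ℝ}
    (h₁ : MapsTo ω₁ I J₁) (h₂ : MapsTo ω₂ I J₂)
    (hd₁ : ∀ z ∈ I, HasDerivAt ω₁ (d₁ z) z) (hd₂ : ∀ z ∈ I, HasDerivAt ω₂ (d₂ z) z)
    (hA : ∀ n, NN J₁ n A) (hB : ∀ n, NN J₂ n B)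
    (e₁ : ∀ z ∈ I, d₁ z = 1 + B (ω₂ z) * d₂ z) (e₂ : ∀ z ∈ I, d₂ z = 1 + A (ω₁ z) * d₁ z)
    (pos : ∀ z ∈ I, 0 < d₁ z) (n : ℕ) :
    (∀ f, (∀ m, NN J₁ m f) → NN I n (fun z => f (ω₁ z))) ∧
    (∀ f, (∀ m, NN J₂ m f) → NN I n (fun z => f (ω₂ z))) ∧ NN I n d₁ ∧ NN I n d₂ := by
  have step : ∀ n, (∀ f, (∀ m, NN J₁ m f) → NN I n (fun z => f (ω₁ z))) →
      (∀ f, (∀ m, NN J₂ m f) → NN I n (fun z => f (ω₂ z))) → NN I n d₁ ∧ NN I n d₂ := by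
    intro n H₁ H₂
    have hAω := H₁ A hA
    have hBω := H₂ B hB
    have key : ∀ z ∈ I, d₁ z * (1 - B (ω₂ z) * A (ω₁ z)) = 1 + B (ω₂ z) := by
      intro z hz
      have h1 := e₁ z hz
      rw [e₂ z hz] at h1
      linear_combination h1
    have hlt : ∀ z ∈ I, B (ω₂ z) * A (ω₁ z) < 1 := by
      intro z hz
      have h3 : 0 < d₁ z * (1 - B (ω₂ z) * A (ω₁ z)) := by
        rw [key z hz]; linarith [hBω.nonneg z hz]
      linarith [(pos_iff_pos_of_mul_pos h3).1 (pos z hz)]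
    have hd : NN I n d₁ := by
      refine (NN.mul hI (.add hI (.const hI n zero_le_one) hBω)
        (.inv_one_sub hI (.mul hI hBω hAω) hlt)).congr hI fun z hz => ?_
      have h3 : 1 - B (ω₂ z) * A (ω₁ z) ≠ 0 := by intro h; linarith [hlt z hz]
      simp only
      rw [← key z hz]
      field_simp
    refine ⟨hd, ?_⟩
    exact (NN.add hI (.const hI n zero_le_one) (.mul hI hAω hd)).congr hI
      fun z hz => (e₂ z hz).symm
  suffices H : (∀ f, (∀ m, NN J₁ m f) → NN I n (fun z => f (ω₁ z))) ∧
      (∀ f, (∀ m, NN J₂ m f) → NN I n (fun z => f (ω₂ z))) from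
    ⟨H.1, H.2, step n H.1 H.2⟩
  induction n with
  | zero => exact ⟨fun f hf z hz => hf 0 _ (h₁ hz), fun f hf z hz => hf 0 _ (h₂ hz)⟩
  | succ n ih =>
    obtain ⟨s1, s2⟩ := step n ih.1 ih.2
    refine ⟨fun f hf => ?_, fun f hf => ?_⟩
    · exact .of_hasDerivAt hI (fun z hz => (hf 0).nonneg _ (h₁ hz))
        (fun z hz => (((hf 1).2.1 _ (h₁ hz)).hasDerivAt.comp z (hd₁ z hz)))
        (.mul hI (ih.1 _ fun m => (hf (m + 1)).2.2) s1)
    · exact .of_hasDerivAt hI (fun z hz => (hf 0).nonneg _ (h₂ hz))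
        (fun z hz => (((hf 1).2.1 _ (h₂ hz)).hasDerivAt.comp z (hd₂ z hz)))
        (.mul hI (ih.2 _ fun m => (hf (m + 1)).2.2) s2)

/-- If `R₀ = P₀ ∘ ω` with `ω' ≥ 1` in the absolutely monotone sense, then the derivatives of `R₀`
dominate those of `P₀` at `ω`. -/
lemma comp_dominated {J : Set ℝ} (hI : IsOpen I) {ω d : ℝ → ℝ} {P R : ℕ → ℝ → ℝ}
    (hω : MapsTo ω I J) (hd : ∀ z ∈ I, HasDerivAt ω (d z) z)
    (hd1 : ∀ m, NN I m (fun z => d z - 1))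
    (hP : ∀ n, ∀ w ∈ J, HasDerivAt (P n) (P (n + 1) w) w)
    (hR : ∀ n, ∀ z ∈ I, HasDerivAt (R n) (R (n + 1) z) z)
    (hPω : ∀ n m, NN I m (fun z => P n (ω z)))
    (h0 : ∀ z ∈ I, R 0 z = P 0 (ω z)) (n : ℕ) :
    ∀ m, NN I m (fun z => R n z - P n (ω z)) := by
  induction n with
  | zero => exact fun m => (NN.zero hI m).congr hI fun z hz => by simp [h0 z hz]
  | succ n ih =>
    intro m
    refine (NN.add hI (ih (m + 1)).2.2 (.mul hI (hPω (n + 1) m) (hd1 m))).congr hI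
      fun z hz => ?_
    have := ((hR n z hz).sub ((hP n _ (hω hz)).comp z (hd z hz))).deriv
    change deriv (fun z => R n z - P n (ω z)) z = _ at this
    simp only
    rw [this]
    ring

end

/-- Kaluza's theorem: the reciprocal of a power series with positive log-convex coefficients `p`
has coefficients of constant sign from order one on (here `q` are the coefficients of minus the
reciprocal). -/
lemma kaluza {p q : ℕ → ℝ} (hp : ∀ n, 0 < p n)
    (hlc : ∀ m j, p (m + j) * p (m + 1) ≤ p (m + j + 1) * p m) (hq0 : q 0 ≤ 0)
    (hpq : ∀ n, ∑ j ∈ Finset.range (n + 2), q j * p (n + 1 - j) = 0) (n : ℕ) : 0 ≤ q (n + 1) := by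
  induction n using Nat.strong_induction_on with
  | _ n ih =>
  have h1 := hpq n
  rw [Finset.sum_range_succ, Nat.sub_self] at h1
  have h0 := hp 0
  rcases n with _ | n
  · simp at h1
    have : q (0 + 1) * p 0 = - (q 0 * p 1) := by simpa using by linarith
    by_contra hneg
    push Not at hneg
    nlinarith [hp 1]
  · have h2 := hpq n
    have h3 : p (n + 1) * (q (n + 2) * p 0) = ∑ j ∈ Finset.range (n + 2),
        q j * (p (n + 2) * p (n + 1 - j) - p (n + 1) * p (n + 2 - j)) := by
      have : ∑ j ∈ Finset.range (n + 2),
        q j * (p (n + 2) * p (n + 1 - j) - p (n + 1) * p (n + 2 - j)) =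
        p (n + 2) * ∑ j ∈ Finset.range (n + 2), q j * p (n + 1 - j)
          - p (n + 1) * ∑ j ∈ Finset.range (n + 2), q j * p (n + 2 - j) := by
        rw [Finset.mul_sum, Finset.mul_sum, ← Finset.sum_sub_distrib]
        refine Finset.sum_congr rfl fun j _ => by ring
      rw [this, h2]
      linear_combination p (n + 1) * h1
    have h4 : 0 ≤ p (n + 1) * (q (n + 2) * p 0) := by
      rw [h3]
      refine Finset.sum_nonneg fun j hj => ?_
      rw [Finset.mem_range] at hj
      rcases j with _ | j
      · simp only [Nat.sub_zero]
        exact le_of_eq (by ring)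
      · refine mul_nonneg (ih j (by omega)) ?_
        have := hlc (n + 1 - (j + 1)) (j + 1)
        rw [show n + 1 - (j + 1) + (j + 1) = n + 1 by omega,
          show n + 1 - (j + 1) + 1 = n + 2 - (j + 1) by omega] at this
        linarith
    have h5 : 0 < p (n + 1) * p 0 := mul_pos (hp _) h0
    by_contra hneg
    push Not at hneg
    nlinarith

lemma analyticAt_iteratedDeriv {f : ℝ → ℝ} {w : ℝ} (h : AnalyticAt ℝ f w) (n : ℕ) :
    AnalyticAt ℝ (iteratedDeriv n f) w := by
  rw [iteratedDeriv_eq_iterate]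
  exact h.iterated_deriv n

section
variable {μ : Measure ℝ} [IsProbabilityMeasure μ] {a b : ℝ} (hB : Bounds μ a b)
include hB

lemma iteratedDeriv_mom {w : ℝ} (hw : w < a) (n : ℕ) :
    iteratedDeriv n (mom μ 0) w = n.factorial * mom μ n w := by
  induction n generalizing w with
  | zero => simp
  | succ n ih =>
    rw [iteratedDeriv_succ]
    have : iteratedDeriv n (mom μ 0) =ᶠ[nhds w] fun w => n.factorial * mom μ n w := by
      filter_upwards [Iio_mem_nhds hw] with x hx using ih hx
    rw [this.deriv_eq, ((hasDerivAt_mom hB hw n).const_mul _).deriv, Nat.factorial_succ]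
    push_cast
    ring

lemma NN_mom (n m : ℕ) : NN (Iio a) m (fun w => n.factorial * mom μ n w) := by
  induction m generalizing n with
  | zero => exact fun w hw => mul_nonneg (by positivity) (mom_pos hB hw n).le
  | succ m ih =>
    refine .of_hasDerivAt isOpen_Iio
      (fun w hw => mul_nonneg (by positivity) (mom_pos hB hw n).le) (fun w hw => ?_) (ih (n + 1))
    convert! (hasDerivAt_mom hB hw n).const_mul (n.factorial : ℝ) using 1
    rw [Nat.factorial_succ]
    push_cast
    ring

lemma analyticAt_neg_inv_mom {w : ℝ} (hw : w < a) : AnalyticAt ℝ (fun w => -(mom μ 0 w)⁻¹) w :=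
  ((analyticAt_mom_zero hB hw).fun_inv (mom_pos hB hw 0).ne').fun_neg

/-- All derivatives of `-1/G_μ` of positive order are nonnegative left of the support. -/
lemma iteratedDeriv_neg_inv_mom_nonneg {w : ℝ} (hw : w < a) (n : ℕ) :
    0 ≤ iteratedDeriv (n + 1) (fun w => -(mom μ 0 w)⁻¹) w := by
  set Q : ℝ → ℝ := fun w => -(mom μ 0 w)⁻¹ with hQ
  have hk := kaluza (p := fun n => mom μ n w) (q := fun n => iteratedDeriv n Q w / n.factorial)
    (fun n => mom_pos hB hw n) (fun m j => mom_logconvex hB hw m j)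
    (by simp [hQ, (mom_pos hB hw 0).le]) (fun n => ?_) n
  · have hf : (0 : ℝ) < ((n + 1).factorial : ℝ) := by positivity
    simpa [div_nonneg_iff, hf, hf.le, hf.not_ge] using hk
  · have h1 := iteratedDeriv_fun_mul (n := n + 1) (analyticAt_neg_inv_mom hB hw).contDiffAt
      (analyticAt_mom_zero hB hw).contDiffAt
    have h2 : (fun i => Q i * mom μ 0 i) =ᶠ[nhds w] fun _ => (-1 : ℝ) := by
      filter_upwards [Iio_mem_nhds hw] with x hx
      have := (mom_pos hB hx 0).ne'
      simp only [hQ]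
      field_simp
    rw [h2.iteratedDeriv_eq, iteratedDeriv_const] at h1
    simp only [Nat.add_eq_zero_iff, one_ne_zero, and_false, if_false] at h1
    have hf : ((n + 1).factorial : ℝ) ≠ 0 := by positivity
    refine (mul_right_inj' hf).1 ?_
    rw [mul_zero, h1, Finset.mul_sum]
    refine Finset.sum_congr rfl fun j hj => ?_
    have hj' : j ≤ n + 1 := by rw [Finset.mem_range] at hj; omega
    rw [iteratedDeriv_mom hB hw, ← Nat.choose_mul_factorial_mul_factorial hj']
    have : (j.factorial : ℝ) ≠ 0 := by positivity
    change _ = _ * iteratedDeriv j Q w * _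
    generalize iteratedDeriv j Q w = X
    push_cast
    field_simp

/-- The derivative of `h_μ(w) = -1/G_μ(w) - w` is absolutely monotone on `(-∞, a)`. -/
lemma NN_hderiv (m : ℕ) : NN (Iio a) m (fun w => mom μ 1 w / mom μ 0 w ^ 2 - 1) := by
  have hd : ∀ w ∈ Iio a, HasDerivAt (fun w => -(mom μ 0 w)⁻¹) (mom μ 1 w / mom μ 0 w ^ 2) w := by
    intro w hw
    convert! ((hasDerivAt_mom hB hw 0).inv (mom_pos hB hw 0).ne').neg using 1
    simp [neg_div]
  have hit : ∀ m n, NN (Iio a) m (iteratedDeriv (n + 1) (fun w => -(mom μ 0 w)⁻¹)) := by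
    intro m
    induction m with
    | zero => exact fun n w hw => iteratedDeriv_neg_inv_mom_nonneg hB hw n
    | succ m ih =>
      intro n
      refine ⟨fun w hw => iteratedDeriv_neg_inv_mom_nonneg hB hw n, fun w hw => ?_, ?_⟩
      · exact (analyticAt_iteratedDeriv (analyticAt_neg_inv_mom hB hw) (n + 1)).differentiableAt
      · rw [← iteratedDeriv_succ]; exact ih (n + 1)
  have h0 : ∀ w ∈ Iio a, 0 ≤ mom μ 1 w / mom μ 0 w ^ 2 - 1 := by
    intro w hw
    have := mom_pos hB hw 0
    rw [sub_nonneg, one_le_div (by positivity)]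
    exact sq_mom_zero_le hB hw
  cases m with
  | zero => exact h0
  | succ m =>
    refine .of_hasDerivAt isOpen_Iio h0 (f' := iteratedDeriv 2 (fun w => -(mom μ 0 w)⁻¹))
      (fun w hw => ?_) (hit m 1)
    have h1 : (fun w => mom μ 1 w / mom μ 0 w ^ 2 - 1) =ᶠ[nhds w]
        fun w => iteratedDeriv 1 (fun w => -(mom μ 0 w)⁻¹) w - 1 := by
      filter_upwards [Iio_mem_nhds hw] with x hx
      rw [iteratedDeriv_one, (hd x hx).deriv]
    refine HasDerivAt.congr_of_eventuallyEq ?_ h1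
    rw [iteratedDeriv_succ (n := 1)]
    exact ((analyticAt_iteratedDeriv (analyticAt_neg_inv_mom hB hw) 1).differentiableAt.hasDerivAt).sub_const
      1

end

/-! ### The inverse of the Stieltjes transform and the R-transform -/

/-- The set `(0, G_μ(a_μ))` of values of `G_μ` to the left of the support. -/
def gRange (μ : Measure ℝ) : Set ℝ := Gst μ '' Iio (aInf μ)

section
variable {μ : Measure ℝ} [IsProbabilityMeasure μ] (hc : HasCompactSupp μ)
include hc

lemma Gst_pos {w : ℝ} (hw : w < aInf μ) : 0 < Gst μ w := by
  rw [Gst_eq_mom]; exact mom_pos (bounds_of_compact hc) hw 0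

lemma hasDerivAt_Gst {w : ℝ} (hw : w < aInf μ) : HasDerivAt (Gst μ) (mom μ 1 w) w := by
  have := hasDerivAt_mom (bounds_of_compact hc) hw 0
  rw [Gst_eq_mom]
  simpa using this

lemma analyticAt_Gst {w : ℝ} (hw : w < aInf μ) : AnalyticAt ℝ (Gst μ) w := by
  rw [Gst_eq_mom]; exact analyticAt_mom_zero (bounds_of_compact hc) hw

lemma continuousOn_Gst : ContinuousOn (Gst μ) (Iio (aInf μ)) :=
  fun _ hw => (hasDerivAt_Gst hc hw).continuousAt.continuousWithinAt

lemma Gst_strictMono : StrictMonoOn (Gst μ) (Iio (aInf μ)) := by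
  refine strictMonoOn_of_deriv_pos (convex_Iio _) (continuousOn_Gst hc) fun w hw => ?_
  rw [interior_Iio] at hw
  rw [(hasDerivAt_Gst hc hw).deriv]
  exact mom_pos (bounds_of_compact hc) hw 1

lemma Gst_le {w : ℝ} (hw : w < aInf μ) : Gst μ w ≤ (aInf μ - w)⁻¹ := by
  have := mom_le (bounds_of_compact hc) hw 0
  rw [Gst_eq_mom]
  simpa using this

lemma le_Gst {w : ℝ} (hw : w < aInf μ) : (bSup μ - w)⁻¹ ≤ Gst μ w := by
  have := le_mom (bounds_of_compact hc) hw 0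
  rw [Gst_eq_mom]
  simpa using this

lemma Gst_nonpos {w : ℝ} (hw : bSup μ < w) : Gst μ w ≤ 0 := by
  refine integral_nonpos_of_ae ?_
  filter_upwards [(bounds_of_compact hc).hi] with l hl
  exact inv_nonpos.2 (by linarith)

lemma Ginv_Gst {w : ℝ} (hw : w < aInf μ) : Ginv μ (Gst μ w) = w := by
  have hex : ∃ x ∈ Iio (aInf μ) ∪ Ioi (bSup μ), Gst μ x = Gst μ w := ⟨w, Or.inl hw, rfl⟩
  have h1 := Function.invFunOn_mem hex
  have h2 := Function.invFunOn_eq hex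
  change Ginv μ (Gst μ w) ∈ _ at h1
  change Gst μ (Ginv μ (Gst μ w)) = _ at h2
  rcases h1 with h1 | h1
  · exact (Gst_strictMono hc).injOn h1 hw h2
  · have := Gst_nonpos hc h1
    have := Gst_pos hc hw
    linarith

lemma Ginv_lt {g : ℝ} (hg : g ∈ gRange μ) : Ginv μ g < aInf μ := by
  obtain ⟨w, hw, rfl⟩ := hg
  rwa [Ginv_Gst hc hw]

lemma Gst_Ginv {g : ℝ} (hg : g ∈ gRange μ) : Gst μ (Ginv μ g) = g := by
  obtain ⟨w, hw, rfl⟩ := hg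
  rw [Ginv_Gst hc hw]

lemma gRange_pos {g : ℝ} (hg : g ∈ gRange μ) : 0 < g := by
  obtain ⟨w, hw, rfl⟩ := hg
  exact Gst_pos hc hw

lemma gRange_down {g g' : ℝ} (hg : g ∈ gRange μ) (h0 : 0 < g') (h : g' ≤ g) : g' ∈ gRange μ := by
  obtain ⟨w, hw, rfl⟩ := hg
  rw [mem_Iio] at hw
  have h0' : 0 < g'⁻¹ := inv_pos.2 h0
  set v := min w (aInf μ - g'⁻¹) with hv
  have hvw : v ≤ w := min_le_left _ _
  have hv1 : Gst μ v ≤ g' := by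
    refine (Gst_le hc (hvw.trans_lt hw)).trans ?_
    rw [inv_le_comm₀ (by linarith) h0]
    have : v ≤ aInf μ - g'⁻¹ := min_le_right _ _
    linarith
  obtain ⟨x, hx, hxe⟩ := intermediate_value_Icc hvw
    ((continuousOn_Gst hc).mono fun x hx => hx.2.trans_lt hw) ⟨hv1, h⟩
  exact ⟨x, hx.2.trans_lt hw, hxe⟩

lemma gRange_exists_gt {g : ℝ} (hg : g ∈ gRange μ) : ∃ g' ∈ gRange μ, g < g' := by
  obtain ⟨w, hw, rfl⟩ := hg
  obtain ⟨v, hv, hva⟩ := exists_between (mem_Iio.1 hw)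
  exact ⟨_, ⟨v, hva, rfl⟩, Gst_strictMono hc hw hva hv⟩

lemma gRange_isOpen : IsOpen (gRange μ) := by
  rw [isOpen_iff_mem_nhds]
  intro g hg
  obtain ⟨g', hg', hlt⟩ := gRange_exists_gt hc hg
  filter_upwards [Ioo_mem_nhds (gRange_pos hc hg) hlt] with x hx
  exact gRange_down hc hg' hx.1 hx.2.le

omit hc [IsProbabilityMeasure μ] in
lemma gRange_nonempty : (gRange μ).Nonempty := nonempty_Iio.image _

lemma lt_GaSup_iff {g : ℝ} (h0 : 0 < g) : (g : EReal) < GaSup μ ↔ g ∈ gRange μ := by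
  rw [GaSup, lt_sSup_iff]
  constructor
  · rintro ⟨_, ⟨w, hw, rfl⟩, hlt⟩
    exact gRange_down hc ⟨w, hw, rfl⟩ h0 (EReal.coe_lt_coe_iff.1 hlt).le
  · intro hg
    obtain ⟨_, ⟨w, hw, rfl⟩, hlt⟩ := gRange_exists_gt hc hg
    exact ⟨_, ⟨w, hw, rfl⟩, EReal.coe_lt_coe_iff.2 hlt⟩

lemma GbInf_nonpos : GbInf μ ≤ 0 := by
  have h1 : GbInf μ ≤ ((Gst μ (bSup μ + 1) : ℝ) : EReal) :=
    sInf_le ⟨bSup μ + 1, by simp, rfl⟩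
  exact h1.trans (by exact_mod_cast Gst_nonpos hc (lt_add_one (bSup μ)))

lemma neg_mem_Dhat_iff {g : ℝ} (h0 : 0 < g) : -g ∈ Dhat μ ↔ g ∈ gRange μ := by
  rw [← lt_GaSup_iff hc h0]
  simp only [Dhat, mem_ofPred_eq, EReal.coe_neg, EReal.neg_lt_neg_iff]
  refine and_iff_left_of_imp fun _ => (GbInf_nonpos hc).trans_lt ?_
  exact_mod_cast h0

lemma Ginv_comp_eventuallyEq {w : ℝ} (hw : w < aInf μ) :
    (fun x => Ginv μ (Gst μ x)) =ᶠ[nhds w] id := by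
  filter_upwards [Iio_mem_nhds hw] with x hx using Ginv_Gst hc hx

lemma hasDerivAt_Ginv {g : ℝ} (hg : g ∈ gRange μ) :
    HasDerivAt (Ginv μ) (mom μ 1 (Ginv μ g))⁻¹ g := by
  obtain ⟨w, hw, rfl⟩ := hg
  rw [Ginv_Gst hc hw, ← (hasDerivAt_Gst hc hw).deriv]
  refine ((analyticAt_Gst hc hw).hasStrictDerivAt.to_local_left_inverse ?_
    (Ginv_comp_eventuallyEq hc hw)).hasDerivAt
  rw [(hasDerivAt_Gst hc hw).deriv]
  exact (mom_pos (bounds_of_compact hc) hw 1).ne'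

lemma analyticAt_Ginv {g : ℝ} (hg : g ∈ gRange μ) : AnalyticAt ℝ (Ginv μ) g := by
  obtain ⟨w, hw, rfl⟩ := hg
  refine (analyticAt_comp_iff_of_deriv_ne_zero (analyticAt_Gst hc hw) ?_).1 ?_
  rotate_left
  · exact analyticAt_id.congr (Ginv_comp_eventuallyEq hc hw).symm
  · rw [(hasDerivAt_Gst hc hw).deriv]
    exact (mom_pos (bounds_of_compact hc) hw 1).ne'

omit hc [IsProbabilityMeasure μ] in
lemma Rhat_neg (g : ℝ) : Rhat μ (-g) = Ginv μ g + g⁻¹ := by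
  simp [Rhat, inv_neg]

lemma Rhat_bounds {g : ℝ} (hg : g ∈ gRange μ) :
    aInf μ ≤ Ginv μ g + g⁻¹ ∧ Ginv μ g + g⁻¹ ≤ bSup μ := by
  have h0 := gRange_pos hc hg
  obtain ⟨w, hw, rfl⟩ := hg
  rw [mem_Iio] at hw
  have hab := (bounds_of_compact hc).le
  rw [Ginv_Gst hc hw]
  have h1 := Gst_le hc hw
  have h2 := le_Gst hc hw
  rw [le_inv_comm₀ h0 (by linarith)] at h1
  rw [inv_le_comm₀ (by linarith) h0] at h2
  constructor <;> linarith

/-- The derivative of `g ↦ R̂_μ(-g)`, up to sign. -/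
noncomputable def rder (μ : Measure ℝ) (g : ℝ) : ℝ := (g ^ 2)⁻¹ - (mom μ 1 (Ginv μ g))⁻¹

lemma hasDerivAt_Ginv_add_inv {g : ℝ} (hg : g ∈ gRange μ) :
    HasDerivAt (fun g => Ginv μ g + g⁻¹) (-rder μ g) g := by
  convert! (hasDerivAt_Ginv hc hg).add (hasDerivAt_inv (gRange_pos hc hg).ne') using 1
  rw [rder]; ring

lemma deriv_Rhat {g : ℝ} (hg : g ∈ gRange μ) : deriv (Rhat μ) (-g) = rder μ g := by
  have h1 : HasDerivAt (fun u => Ginv μ (-u) + (-u)⁻¹) (-rder μ g * -1) (-g) := by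
    have h2 := hasDerivAt_Ginv_add_inv hc hg
    exact HasDerivAt.comp (-g) (h₂ := fun g => Ginv μ g + g⁻¹) (by rwa [neg_neg])
      (hasDerivAt_neg (-g))
  have h3 : Rhat μ = fun u => Ginv μ (-u) + (-u)⁻¹ := by
    funext u; simp [Rhat, inv_neg, sub_eq_add_neg]
  rw [h3, h1.deriv]; ring

lemma rder_nonneg {g : ℝ} (hg : g ∈ gRange μ) : 0 ≤ rder μ g := by
  have h0 := gRange_pos hc hg
  have h1 := sq_mom_zero_le (bounds_of_compact hc) (Ginv_lt hc hg)
  rw [← Gst_eq_mom, Gst_Ginv hc hg] at h1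
  rw [rder, sub_nonneg]
  exact inv_anti₀ (by positivity) h1

lemma rder_pos (hnd : Nondeg μ) {g : ℝ} (hg : g ∈ gRange μ) : 0 < rder μ g := by
  have h0 := gRange_pos hc hg
  have h1 := sq_mom_zero_lt (bounds_of_compact hc) hnd (Ginv_lt hc hg)
  rw [← Gst_eq_mom, Gst_Ginv hc hg] at h1
  rw [rder, sub_pos]
  exact inv_strictAnti₀ (by positivity) h1

/-- The primitive `∫₀^g s R̂_μ'(-s) ds` in closed form. -/
noncomputable def Jfun (μ : Measure ℝ) (g : ℝ) : ℝ :=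
  Real.log g + ∫ l, Real.log (l - Ginv μ g) ∂μ

lemma hasDerivAt_Jfun {g : ℝ} (hg : g ∈ gRange μ) : HasDerivAt (Jfun μ) (g * rder μ g) g := by
  have h0 := gRange_pos hc hg
  have h1 := (hasDerivAt_logint (bounds_of_compact hc) (Ginv_lt hc hg)).comp g
    (hasDerivAt_Ginv hc hg)
  rw [← Gst_eq_mom, Gst_Ginv hc hg] at h1
  convert! (Real.hasDerivAt_log h0.ne').add h1 using 1
  rw [rder]
  field_simp
  ring

/-- Left of the support `λ - K_μ(g)` differs from `1/g` by at most `b_μ - a_μ`. -/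
lemma Jfun_bounds {g : ℝ} (hg : g ∈ gRange μ) (h1 : g * (bSup μ - aInf μ) < 1) :
    Real.log (1 - g * (bSup μ - aInf μ)) ≤ Jfun μ g ∧
      Jfun μ g ≤ Real.log (1 + g * (bSup μ - aInf μ)) := by
  have hB := bounds_of_compact hc
  have h0 := gRange_pos hc hg
  have hi := integrable_log hB (Ginv_lt hc hg)
  obtain ⟨h2, h3⟩ := Rhat_bounds hc hg
  have hab := hB.le
  have hK := Ginv_lt hc hg
  have hgi : g * g⁻¹ = 1 := mul_inv_cancel₀ h0.ne'
  have hJ : Jfun μ g = ∫ l, (Real.log g + Real.log (l - Ginv μ g)) ∂μ := by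
    rw [integral_add (integrable_const _) hi]; simp [Jfun]
  rw [hJ]
  have hi' := (integrable_const (Real.log g)).add hi
  constructor
  · have := integral_mono_ae (integrable_const (Real.log (1 - g * (bSup μ - aInf μ)))) hi' (by
      filter_upwards [hB.lo] with l hl
      simp only [Pi.add_apply]
      rw [← Real.log_mul h0.ne' (by linarith)]
      refine Real.log_le_log (by linarith) ?_
      nlinarith)
    simpa using this
  · have := integral_mono_ae hi' (integrable_const (Real.log (1 + g * (bSup μ - aInf μ)))) (by
      filter_upwards [hB.lo, hB.hi] with l hl hl'
      simp only [Pi.add_apply]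
      rw [← Real.log_mul h0.ne' (by linarith)]
      refine Real.log_le_log (mul_pos h0 (by linarith)) ?_
      nlinarith)
    simpa using this

lemma tendsto_Jfun : Tendsto (Jfun μ) (nhdsWithin 0 (Ioi 0)) (nhds 0) := by
  obtain ⟨g₀, hg₀⟩ := gRange_nonempty (μ := μ)
  have h0 := gRange_pos hc hg₀
  have e1 : ∀ᶠ g in nhdsWithin (0:ℝ) (Ioi 0), g ∈ gRange μ := by
    filter_upwards [Ioo_mem_nhdsGT h0] with g hg using gRange_down hc hg₀ hg.1 hg.2.le
  have c0 : Tendsto (fun g : ℝ => g * (bSup μ - aInf μ)) (nhdsWithin 0 (Ioi 0)) (nhds 0) := by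
    have : ContinuousAt (fun g : ℝ => g * (bSup μ - aInf μ)) 0 := by fun_prop
    have := this.tendsto
    rw [zero_mul] at this
    exact this.mono_left nhdsWithin_le_nhds
  have e2 : ∀ᶠ g in nhdsWithin (0:ℝ) (Ioi 0), g * (bSup μ - aInf μ) < 1 :=
    c0.eventually_lt_const one_pos
  have l1 : Tendsto (fun g : ℝ => Real.log (1 - g * (bSup μ - aInf μ))) (nhdsWithin 0 (Ioi 0))
      (nhds 0) := by
    have := (c0.const_sub 1).log (by simp)
    simpa using this
  have l2 : Tendsto (fun g : ℝ => Real.log (1 + g * (bSup μ - aInf μ))) (nhdsWithin 0 (Ioi 0))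
      (nhds 0) := by
    have := (c0.const_add 1).log (by simp)
    simpa using this
  refine tendsto_of_tendsto_of_tendsto_of_le_of_le' l1 l2 ?_ ?_
  · filter_upwards [e1, e2] with g h1 h2 using (Jfun_bounds hc h1 h2).1
  · filter_upwards [e1, e2] with g h1 h2 using (Jfun_bounds hc h1 h2).2

/-- The integrand is nonnegative, so it is integrable as the derivative of a
function continuous up to `0`. -/
lemma integral_Rhat {g : ℝ} (hg : g ∈ gRange μ) :
    ∫ s in (0:ℝ)..g, s * deriv (Rhat μ) (-s) = Jfun μ g := by
  have h0 := gRange_pos hc hg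
  -- `Jfun μ 0` is a junk value; the continuous extension to `0` takes the value `0` there
  set F : ℝ → ℝ := Function.update (Jfun μ) 0 0 with hF
  have hFe : ∀ s, s ≠ 0 → F =ᶠ[nhds s] Jfun μ := fun s hs =>
    (eventually_ne_nhds hs).mono fun x hx => by simp [hF, hx]
  have hS : ∀ s ∈ Ioc 0 g, s ∈ gRange μ := fun s hs => gRange_down hc hg hs.1 hs.2
  have hd : ∀ s ∈ Ioc 0 g, HasDerivAt F (s * deriv (Rhat μ) (-s)) s := by
    intro s hs
    rw [deriv_Rhat hc (hS s hs)]
    exact (hasDerivAt_Jfun hc (hS s hs)).congr_of_eventuallyEq (hFe s hs.1.ne')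
  have hcont : ContinuousOn F (Icc 0 g) := by
    intro s hs
    rcases hs.1.eq_or_lt with rfl | hs0
    · refine ContinuousWithinAt.mono (t := Ici 0) ?_ Icc_subset_Ici_self
      rw [hF, continuousWithinAt_update_same]
      simpa using tendsto_Jfun hc
    · exact (hd s ⟨hs0, hs.2⟩).continuousAt.continuousWithinAt
  rw [intervalIntegral.integral_eq_sub_of_hasDerivAt_of_le h0.le hcont
    (fun s hs => hd s ⟨hs.1, hs.2.le⟩)]
  · simp [hF, h0.ne']
  · rw [intervalIntegrable_iff_integrableOn_Ioc_of_le h0.le]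
    refine intervalIntegral.integrableOn_deriv_of_nonneg hcont
      (fun s hs => hd s ⟨hs.1, hs.2.le⟩) fun s hs => ?_
    rw [deriv_Rhat hc (hS s ⟨hs.1, hs.2.le⟩)]
    exact mul_nonneg hs.1.le (rder_nonneg hc (hS s ⟨hs.1, hs.2.le⟩))

end

/-! ### Subordination up to the edge of the support -/

section
variable {μ ν ρ : Measure ℝ} [IsProbabilityMeasure μ] [IsProbabilityMeasure ν]
  [IsProbabilityMeasure ρ] (hcμ : HasCompactSupp μ) (hcν : HasCompactSupp ν)
  (hcρ : HasCompactSupp ρ)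
include hcμ hcν hcρ

/-- The additivity of the `R`-transforms near the origin propagates analytically to every argument
at which the three inverses are defined. -/
lemma Ginv_add (hfree : ∃ ε > (0 : ℝ), ∀ g ∈ Ioo 0 ε, Ginv ρ g = Ginv μ g + Ginv ν g + g⁻¹) {g : ℝ}
    (hμ : g ∈ gRange μ) (hν : g ∈ gRange ν) (hρ : g ∈ gRange ρ) :
    Ginv ρ g = Ginv μ g + Ginv ν g + g⁻¹ := by
  obtain ⟨ε, hε, hfree⟩ := hfree
  set U : Set ℝ := gRange μ ∩ gRange ν ∩ gRange ρ with hU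
  have hgU : g ∈ U := ⟨⟨hμ, hν⟩, hρ⟩
  have h0 := gRange_pos hcρ hρ
  have hdown : ∀ x, 0 < x → ∀ y ∈ U, x ≤ y → x ∈ U := fun x hx y hy hxy =>
    ⟨⟨gRange_down hcμ hy.1.1 hx hxy, gRange_down hcν hy.1.2 hx hxy⟩, gRange_down hcρ hy.2 hx hxy⟩
  have hconn : IsPreconnected U := by
    refine OrdConnected.isPreconnected ⟨fun x hx y hy t ht => ?_⟩
    exact hdown t ((gRange_pos hcρ hx.2).trans_le ht.1) y hy ht.2
  set x := min g (ε / 2) with hx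
  have hx0 : 0 < x := lt_min h0 (by linarith)
  have hxε : x < ε := (min_le_right _ _).trans_lt (by linarith)
  refine AnalyticOnNhd.eqOn_of_preconnected_of_eventuallyEq (U := U) (z₀ := x)
    (fun t ht => analyticAt_Ginv hcρ ht.2)
    (g := fun g => Ginv μ g + Ginv ν g + g⁻¹)
    (fun t ht => ?_) hconn (hdown x hx0 g hgU (min_le_left _ _)) ?_ hgU
  · exact ((analyticAt_Ginv hcμ ht.1.1).add (analyticAt_Ginv hcν ht.1.2)).add
      (analyticAt_id.inv (gRange_pos hcρ ht.2).ne')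
  · filter_upwards [Ioo_mem_nhds hx0 hxε] with t ht using hfree t ht

/-- The points left of the support of `ρ` at which both subordination functions `G_μ⁻¹ ∘ G_ρ` and
`G_ν⁻¹ ∘ G_ρ` are defined. -/
def subordDom (μ ν ρ : Measure ℝ) : Set ℝ := Iio (aInf ρ) ∩ Gst ρ ⁻¹' (gRange μ ∩ gRange ν)

lemma isOpen_subordDom : IsOpen (subordDom μ ν ρ) :=
  (continuousOn_Gst hcρ).isOpen_inter_preimage isOpen_Iio
    ((gRange_isOpen hcμ).inter (gRange_isOpen hcν))

omit hcν in
lemma hasDerivAt_subord {z : ℝ} (hz : z < aInf ρ) (hg : Gst ρ z ∈ gRange μ) :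
    HasDerivAt (fun z => Ginv μ (Gst ρ z)) ((mom μ 1 (Ginv μ (Gst ρ z)))⁻¹ * mom ρ 1 z) z :=
  (hasDerivAt_Ginv hcμ hg).comp z (hasDerivAt_Gst hcρ hz)

/-- The moments `∫ (λ - z)^{-n-1} dρ` dominate the moments of `μ` at the subordinated point. -/
lemma mom_subord_le
    (hid : ∀ g ∈ gRange μ, g ∈ gRange ν → g ∈ gRange ρ → Ginv ρ g = Ginv μ g + Ginv ν g + g⁻¹)
    {z : ℝ} (hz : z ∈ subordDom μ ν ρ) (n : ℕ) :
    mom μ n (Ginv μ (Gst ρ z)) ≤ mom ρ n z := by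
  have hI := isOpen_subordDom hcμ hcν hcρ
  have hBμ := bounds_of_compact hcμ
  have hBν := bounds_of_compact hcν
  have hBρ := bounds_of_compact hcρ
  set I := subordDom μ ν ρ with hIdef
  set ω₁ : ℝ → ℝ := fun z => Ginv μ (Gst ρ z) with hω₁
  set ω₂ : ℝ → ℝ := fun z => Ginv ν (Gst ρ z) with hω₂
  set d₁ : ℝ → ℝ := fun z => (mom μ 1 (ω₁ z))⁻¹ * mom ρ 1 z with hd₁
  set d₂ : ℝ → ℝ := fun z => (mom ν 1 (ω₂ z))⁻¹ * mom ρ 1 z with hd₂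
  set A : ℝ → ℝ := fun w => mom μ 1 w / mom μ 0 w ^ 2 - 1 with hA
  set B : ℝ → ℝ := fun w => mom ν 1 w / mom ν 0 w ^ 2 - 1 with hB
  have m₁ : MapsTo ω₁ I (Iio (aInf μ)) := fun z hz => Ginv_lt hcμ hz.2.1
  have m₂ : MapsTo ω₂ I (Iio (aInf ν)) := fun z hz => Ginv_lt hcν hz.2.2
  have D₁ : ∀ z ∈ I, HasDerivAt ω₁ (d₁ z) z := fun z hz => hasDerivAt_subord hcμ hcρ hz.1 hz.2.1
  have D₂ : ∀ z ∈ I, HasDerivAt ω₂ (d₂ z) z := fun z hz => hasDerivAt_subord hcν hcρ hz.1 hz.2.2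
  have G₁ : ∀ z ∈ I, mom μ 0 (ω₁ z) = mom ρ 0 z := fun z hz => by
    rw [← Gst_eq_mom, ← Gst_eq_mom]; exact Gst_Ginv hcμ hz.2.1
  have G₂ : ∀ z ∈ I, mom ν 0 (ω₂ z) = mom ρ 0 z := fun z hz => by
    rw [← Gst_eq_mom, ← Gst_eq_mom]; exact Gst_Ginv hcν hz.2.2
  -- differentiating `z = ω₁ z + ω₂ z + 1 / G_ρ z`
  have key : ∀ z ∈ I, d₁ z + d₂ z - mom ρ 1 z / mom ρ 0 z ^ 2 = 1 := by
    intro z hz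
    have h1 : HasDerivAt (fun z => ω₁ z + ω₂ z + (Gst ρ z)⁻¹)
        (d₁ z + d₂ z + -mom ρ 1 z / Gst ρ z ^ 2) z :=
      ((D₁ z hz).add (D₂ z hz)).add ((hasDerivAt_Gst hcρ hz.1).inv (Gst_pos hcρ hz.1).ne')
    have h2 : (fun z => ω₁ z + ω₂ z + (Gst ρ z)⁻¹) =ᶠ[nhds z] id := by
      filter_upwards [hI.mem_nhds hz] with x hx
      rw [id, ← hid _ hx.2.1 hx.2.2 ⟨x, hx.1, rfl⟩, Ginv_Gst hcρ hx.1]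
    have h3 := h1.unique ((hasDerivAt_id z).congr_of_eventuallyEq h2)
    rw [← Gst_eq_mom, ← h3]
    ring
  have p₁ : ∀ z ∈ I, 0 < mom μ 1 (ω₁ z) := fun z hz => mom_pos hBμ (m₁ hz) 1
  have p₂ : ∀ z ∈ I, 0 < mom ν 1 (ω₂ z) := fun z hz => mom_pos hBν (m₂ hz) 1
  have e₁ : ∀ z ∈ I, d₁ z = 1 + B (ω₂ z) * d₂ z := by
    intro z hz
    have h1 := (p₂ z hz).ne'
    have h2 := (mom_pos hBρ hz.1 0).ne'
    have h3 : (B (ω₂ z) + 1) * d₂ z = mom ρ 1 z / mom ρ 0 z ^ 2 := by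
      simp only [hB, hd₂, G₂ z hz]
      field_simp
      ring
    linear_combination key z hz - h3
  have e₂ : ∀ z ∈ I, d₂ z = 1 + A (ω₁ z) * d₁ z := by
    intro z hz
    have h1 := (p₁ z hz).ne'
    have h2 := (mom_pos hBρ hz.1 0).ne'
    have h3 : (A (ω₁ z) + 1) * d₁ z = mom ρ 1 z / mom ρ 0 z ^ 2 := by
      simp only [hA, hd₁, G₁ z hz]
      field_simp
      ring
    linear_combination key z hz - h3
  have pos : ∀ z ∈ I, 0 < d₁ z := fun z hz =>
    mul_pos (inv_pos.2 (p₁ z hz)) (mom_pos hBρ hz.1 1)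
  have S := subord_NN hI m₁ m₂ D₁ D₂ (NN_hderiv hBμ) (NN_hderiv hBν) e₁ e₂ pos
  have hfac : ∀ (τ : Measure ℝ) (k : ℕ) (w : ℝ),
      (k.factorial : ℝ) * ((k + 1) * mom τ (k + 1) w) = ((k + 1).factorial : ℝ) * mom τ (k + 1) w := by
    intro τ k w
    rw [Nat.factorial_succ]
    push_cast
    ring
  have H := comp_dominated (P := fun k w => k.factorial * mom μ k w)
    (R := fun k w => k.factorial * mom ρ k w) hI m₁ D₁
    (fun m => (NN.mul hI ((S m).2.1 _ (NN_hderiv hBν)) (S m).2.2.2).congr hI fun z hz => by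
      simp only; rw [e₁ z hz]; ring)
    (fun k w hw => by
      have := (hasDerivAt_mom hBμ hw k).const_mul (k.factorial : ℝ)
      rwa [hfac] at this)
    (fun k w hw => by
      have := (hasDerivAt_mom hBρ hw.1 k).const_mul (k.factorial : ℝ)
      rwa [hfac] at this)
    (fun k m => (S m).1 _ (NN_mom hBμ k))
    (fun z hz => by simp [G₁ z hz]) n 0
  have h1 := H.nonneg z hz
  have h2 : (0 : ℝ) < (n.factorial : ℝ) := by positivity
  exact le_of_mul_le_mul_left (sub_nonneg.1 h1) h2

/-- The subordinated point lies at least as far from the support of `μ` as `z` from that of `ρ`: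
compare the growth rates of the moments as the order tends to infinity. -/
lemma subord_dist
    (hid : ∀ g ∈ gRange μ, g ∈ gRange ν → g ∈ gRange ρ → Ginv ρ g = Ginv μ g + Ginv ν g + g⁻¹)
    {z : ℝ} (hz : z ∈ subordDom μ ν ρ) :
    aInf ρ - z ≤ aInf μ - Ginv μ (Gst ρ z) := by
  have hBμ := bounds_of_compact hcμ
  have hBρ := bounds_of_compact hcρ
  set w := Ginv μ (Gst ρ z) with hw
  have hwa : w < aInf μ := Ginv_lt hcμ hz.2.1
  have hza : z < aInf ρ := hz.1
  by_contra! hlt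
  set η := ((aInf ρ - z) - (aInf μ - w)) / 2 with hη
  have hη0 : 0 < η := by rw [hη]; linarith
  set c := μ.real (Iio (aInf μ + η)) with hc
  have hc0 : 0 < c := ENNReal.toReal_pos (hBμ.mass η hη0).ne' (measure_ne_top _ _)
  set x := aInf μ + η - w with hx
  set y := aInf ρ - z with hy
  have hx0 : 0 < x := by rw [hx]; linarith
  have hxy : x < y := by rw [hx, hy]; linarith
  have hy0 : 0 < y := hx0.trans hxy
  obtain ⟨n, hn⟩ := exists_pow_lt_of_lt_one hc0 ((div_lt_one hy0).2 hxy)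
  have h1 : c * (x⁻¹) ^ (n + 1) ≤ (y⁻¹) ^ (n + 1) :=
    (mass_le_mom hBμ hwa hη0 n).trans
      ((mom_subord_le hcμ hcν hcρ hid hz n).trans (mom_le hBρ hza n))
  have h2 : c ≤ (x / y) ^ (n + 1) := by
    have : c * (x⁻¹) ^ (n + 1) * x ^ (n + 1) ≤ (y⁻¹) ^ (n + 1) * x ^ (n + 1) :=
      mul_le_mul_of_nonneg_right h1 (by positivity)
    rw [mul_assoc, ← mul_pow, ← mul_pow, inv_mul_cancel₀ hx0.ne', one_pow, mul_one] at this
    rwa [div_eq_mul_inv, mul_comm x]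
  have h3 : (x / y) ^ (n + 1) ≤ (x / y) ^ n :=
    pow_le_pow_of_le_one (by positivity) ((div_lt_one hy0).2 hxy).le (Nat.le_succ n)
  linarith

/-- One step of the continuation argument: the domain of the subordination functions cannot end
left of the support of `ρ`. -/
lemma gRange_of_closure
    (hid : ∀ g ∈ gRange μ, g ∈ gRange ν → g ∈ gRange ρ → Ginv ρ g = Ginv μ g + Ginv ν g + g⁻¹)
    {z : ℝ} (hz : z ∈ closure (subordDom μ ν ρ)) (hza : z < aInf ρ) : Gst ρ z ∈ gRange μ := by
  have hlt : aInf μ - (aInf ρ - z) < aInf μ := by linarith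
  refine gRange_down hcμ ⟨aInf μ - (aInf ρ - z), hlt, rfl⟩ (Gst_pos hcρ hza) ?_
  refine ContinuousWithinAt.closure_le hz
    (hasDerivAt_Gst hcρ hza).continuousAt.continuousWithinAt
    (ContinuousAt.continuousWithinAt (f := fun z => Gst μ (aInf μ - (aInf ρ - z))) ?_)
    fun y hy => ?_
  · exact ContinuousAt.comp (f := fun z => aInf μ - (aInf ρ - z))
      (hasDerivAt_Gst hcμ hlt).continuousAt (by fun_prop)
  · have h1 := subord_dist hcμ hcν hcρ hid hy
    have hya : y < aInf ρ := hy.1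
    have h2 := (Gst_strictMono hcμ).monotoneOn (Ginv_lt hcμ hy.2.1 : _ ∈ Iio (aInf μ))
      (show aInf μ - (aInf ρ - y) ∈ Iio (aInf μ) by rw [mem_Iio]; linarith) (by linarith)
    rwa [Gst_Ginv hcμ hy.2.1] at h2

/-- `G_ρ(a_ρ) ≤ min (G_μ(a_μ)) (G_ν(a_ν))`, together with the additivity of the inverses on the
whole of `(0, G_ρ(a_ρ))`. -/
lemma gRange_subset
    (hfree : ∃ ε > (0 : ℝ), ∀ g ∈ Ioo 0 ε, Ginv ρ g = Ginv μ g + Ginv ν g + g⁻¹) {g : ℝ}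
    (hg : g ∈ gRange ρ) :
    g ∈ gRange μ ∧ g ∈ gRange ν ∧ Ginv ρ g = Ginv μ g + Ginv ν g + g⁻¹ := by
  have hid : ∀ g ∈ gRange μ, g ∈ gRange ν → g ∈ gRange ρ →
      Ginv ρ g = Ginv μ g + Ginv ν g + g⁻¹ := fun g h1 h2 h3 =>
    Ginv_add hcμ hcν hcρ hfree h1 h2 h3
  have hid' : ∀ g ∈ gRange ν, g ∈ gRange μ → g ∈ gRange ρ →
      Ginv ρ g = Ginv ν g + Ginv μ g + g⁻¹ := fun g h1 h2 h3 => by rw [hid g h2 h1 h3]; ring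
  have hswap : subordDom ν μ ρ = subordDom μ ν ρ := by
    simp only [subordDom, inter_comm]
  suffices H : Iio (aInf ρ) ⊆ subordDom μ ν ρ by
    obtain ⟨z, hz, rfl⟩ := hg
    exact ⟨(H hz).2.1, (H hz).2.2, hid _ (H hz).2.1 (H hz).2.2 ⟨z, hz, rfl⟩⟩
  refine isPreconnected_Iio.subset_of_closure_inter_subset (isOpen_subordDom hcμ hcν hcρ) ?_ ?_
  · obtain ⟨g₁, h₁⟩ := gRange_nonempty (μ := μ)
    obtain ⟨g₂, h₂⟩ := gRange_nonempty (μ := ν)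
    obtain ⟨g₃, h₃⟩ := gRange_nonempty (μ := ρ)
    set t := min g₁ (min g₂ g₃) with ht
    have ht0 : 0 < t := lt_min (gRange_pos hcμ h₁) (lt_min (gRange_pos hcν h₂) (gRange_pos hcρ h₃))
    have t1 := gRange_down hcμ h₁ ht0 (min_le_left _ _)
    have t2 := gRange_down hcν h₂ ht0 ((min_le_right _ _).trans (min_le_left _ _))
    have t3 := gRange_down hcρ h₃ ht0 ((min_le_right _ _).trans (min_le_right _ _))
    refine ⟨Ginv ρ t, Ginv_lt hcρ t3, Ginv_lt hcρ t3, ?_⟩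
    rw [mem_preimage, Gst_Ginv hcρ t3]
    exact ⟨t1, t2⟩
  · rintro z ⟨hz, hza⟩
    exact ⟨hza, gRange_of_closure hcμ hcν hcρ hid hz hza,
      gRange_of_closure hcν hcμ hcρ hid' (hswap ▸ hz) hza⟩

end

/-! ### The variational formula -/

section
variable {μ ν ρ : Measure ℝ} [IsProbabilityMeasure μ] [IsProbabilityMeasure ν]
  [IsProbabilityMeasure ρ] (hcμ : HasCompactSupp μ) (hcν : HasCompactSupp ν)
  (hcρ : HasCompactSupp ρ)
  (hsub : ∀ g ∈ gRange ρ, g ∈ gRange μ ∧ g ∈ gRange ν ∧ Ginv ρ g = Ginv μ g + Ginv ν g + g⁻¹)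
include hcμ hcν hcρ hsub

lemma rder_add {g : ℝ} (hg : g ∈ gRange ρ) : rder ρ g = rder μ g + rder ν g := by
  obtain ⟨h1, h2, -⟩ := hsub g hg
  have e : (fun g => Ginv ρ g + g⁻¹) =ᶠ[nhds g]
      fun g => (Ginv μ g + g⁻¹) + (Ginv ν g + g⁻¹) := by
    filter_upwards [(gRange_isOpen hcρ).mem_nhds hg] with x hx
    rw [(hsub x hx).2.2]; ring
  have := (hasDerivAt_Ginv_add_inv hcρ hg).unique
    (((hasDerivAt_Ginv_add_inv hcμ h1).add (hasDerivAt_Ginv_add_inv hcν h2)).congr_of_eventuallyEq e)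
  linarith

lemma Jfun_add {g : ℝ} (hg : g ∈ gRange ρ) : Jfun ρ g = Jfun μ g + Jfun ν g := by
  set D : ℝ → ℝ := fun g => Jfun ρ g - (Jfun μ g + Jfun ν g) with hD
  have h0 := gRange_pos hcρ hg
  have hd : ∀ x ∈ gRange ρ, HasDerivAt D 0 x := by
    intro x hx
    obtain ⟨h1, h2, -⟩ := hsub x hx
    convert! (hasDerivAt_Jfun hcρ hx).sub
      ((hasDerivAt_Jfun hcμ h1).add (hasDerivAt_Jfun hcν h2)) using 1
    rw [rder_add hcμ hcν hcρ hsub hx]; ring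
  have hconn : IsPreconnected (gRange ρ) := by
    refine OrdConnected.isPreconnected ⟨fun x hx y hy t ht => ?_⟩
    exact gRange_down hcρ hy ((gRange_pos hcρ hx).trans_le ht.1) ht.2
  have hconst : ∀ x ∈ gRange ρ, D x = D g := fun x hx =>
    (gRange_isOpen hcρ).is_const_of_deriv_eq_zero hconn
      (fun y hy => (hd y hy).differentiableAt.differentiableWithinAt)
      (fun y hy => (hd y hy).deriv) hx hg
  have l1 : Tendsto D (nhdsWithin 0 (Ioi 0)) (nhds 0) := by
    simpa using (tendsto_Jfun hcρ).sub ((tendsto_Jfun hcμ).add (tendsto_Jfun hcν))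
  have l2 : Tendsto D (nhdsWithin 0 (Ioi 0)) (nhds (D g)) := by
    refine tendsto_const_nhds.congr' ?_
    filter_upwards [Ioo_mem_nhdsGT h0] with x hx
    exact (hconst x (gRange_down hcρ hg hx.1 hx.2.le)).symm
  have := tendsto_nhds_unique l1 l2
  simp only [hD] at this
  linarith

omit hcν hcρ hsub [IsProbabilityMeasure ν] [IsProbabilityMeasure ρ] in
lemma Efun_eq {z g : ℝ} (hg : g ∈ gRange μ) :
    Efun μ ν z g = Jfun μ g + ∫ l, Real.log (l - (z - (Ginv μ g + g⁻¹))) ∂ν := by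
  rw [Efun, integral_Rhat hcμ hg, Rhat_neg]
  congr 2
  funext l
  congr 1
  ring

omit hcρ hsub [IsProbabilityMeasure ρ] in
lemma hasDerivAt_Efun {z g : ℝ} (hg : g ∈ gRange μ) (hw : z - (Ginv μ g + g⁻¹) < aInf ν) :
    HasDerivAt (Efun μ ν z) (rder μ g * (g - Gst ν (z - (Ginv μ g + g⁻¹)))) g := by
  have hW : HasDerivAt (fun g => z - (Ginv μ g + g⁻¹)) (rder μ g) g := by
    simpa using (hasDerivAt_Ginv_add_inv hcμ hg).const_sub z
  have h1 := (hasDerivAt_Jfun hcμ hg).add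
    ((hasDerivAt_logint (bounds_of_compact hcν) hw).comp g hW)
  refine HasDerivAt.congr_of_eventuallyEq (f := fun g =>
    Jfun μ g + ∫ l, Real.log (l - (z - (Ginv μ g + g⁻¹))) ∂ν) ?_ ?_
  · convert! h1 using 1
    rw [← Gst_eq_mom]; ring
  · filter_upwards [(gRange_isOpen hcμ).mem_nhds hg] with x hx using Efun_eq hcμ hx

lemma Efun_Gst {z : ℝ} (hz : z < aInf ρ) : Efun μ ν z (Gst ρ z) = Upot ρ z := by
  have hg : Gst ρ z ∈ gRange ρ := ⟨z, hz, rfl⟩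
  obtain ⟨h1, h2, h3⟩ := hsub _ hg
  rw [Ginv_Gst hcρ hz] at h3
  have hU : Upot ρ z = ∫ l, Real.log (l - z) ∂ρ := by
    refine integral_congr_ae ?_
    filter_upwards [(bounds_of_compact hcρ).lo] with l hl
    rw [abs_sub_comm, Real.log_abs]
  have hJ := Jfun_add hcμ hcν hcρ hsub hg
  rw [Efun_eq hcμ h1, hU, show z - (Ginv μ (Gst ρ z) + (Gst ρ z)⁻¹) = Ginv ν (Gst ρ z) by linarith]
  simp only [Jfun, Ginv_Gst hcρ hz] at hJ ⊢
  linarith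

/-- The points of the domain of `E_{μ,ν,z}` in `(0, g*_ρ)`. -/
def varDom (μ ν ρ : Measure ℝ) (z : ℝ) : Set ℝ :=
  {g | g ∈ gRange ρ ∧ z - (Ginv μ g + g⁻¹) < aInf ν}

omit hcμ [IsProbabilityMeasure μ] in
lemma Gst_mem_varDom {z : ℝ} (hz : z < aInf ρ) : Gst ρ z ∈ varDom μ ν ρ z := by
  have hg : Gst ρ z ∈ gRange ρ := ⟨z, hz, rfl⟩
  obtain ⟨h1, h2, h3⟩ := hsub _ hg
  rw [Ginv_Gst hcρ hz] at h3
  have := Ginv_lt hcν h2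
  exact ⟨hg, by linarith⟩

omit hcν [IsProbabilityMeasure ν] in
lemma varDom_down {z g g' : ℝ} (hg : g ∈ varDom μ ν ρ z) (h0 : 0 < g') (h : g' ≤ g) :
    g' ∈ varDom μ ν ρ z := by
  refine ⟨gRange_down hcρ hg.1 h0 h, lt_of_le_of_lt ?_ hg.2⟩
  have hg' := (hsub g hg.1).1
  have hmem : ∀ x ∈ Icc g' g, x ∈ gRange μ := fun x hx =>
    gRange_down hcμ hg' (h0.trans_le hx.1) hx.2
  have hanti : AntitoneOn (fun g => Ginv μ g + g⁻¹) (Icc g' g) := by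
    refine antitoneOn_of_deriv_nonpos (convex_Icc _ _)
      (fun x hx => (hasDerivAt_Ginv_add_inv hcμ (hmem x hx)).continuousAt.continuousWithinAt)
      (fun x hx => ?_) (fun x hx => ?_)
    all_goals rw [interior_Icc] at hx
    · exact (hasDerivAt_Ginv_add_inv hcμ
        (hmem x (Ioo_subset_Icc_self hx))).differentiableAt.differentiableWithinAt
    · rw [(hasDerivAt_Ginv_add_inv hcμ (hmem x (Ioo_subset_Icc_self hx))).deriv]
      linarith [rder_nonneg hcμ (hmem x (Ioo_subset_Icc_self hx))]
  have := hanti ⟨le_rfl, h⟩ ⟨h, le_rfl⟩ h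
  simp only at this
  linarith

omit hcμ [IsProbabilityMeasure μ] in
/-- `E'(g) = R̂_μ'(-g) (g - G_ν(w))` with `w = z - R̂_μ(-g)` has the sign of `g - G_ρ(z)`, because
`G_ν⁻¹(g) - w = G_ρ⁻¹(g) - z`. -/
lemma Gst_sub_sign {z g : ℝ} (hz : z < aInf ρ) (hg : g ∈ varDom μ ν ρ z) :
    (g < Gst ρ z → g < Gst ν (z - (Ginv μ g + g⁻¹))) ∧
      (Gst ρ z < g → Gst ν (z - (Ginv μ g + g⁻¹)) < g) := by
  obtain ⟨h1, h2, h3⟩ := hsub _ hg.1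
  have hK := Ginv_lt hcρ hg.1
  have e1 := (Gst_strictMono hcρ).lt_iff_lt hK hz
  have e2 := (Gst_strictMono hcρ).lt_iff_lt hz hK
  have e3 := (Gst_strictMono hcν).lt_iff_lt (Ginv_lt hcν h2) hg.2
  have e4 := (Gst_strictMono hcν).lt_iff_lt hg.2 (Ginv_lt hcν h2)
  rw [Gst_Ginv hcρ hg.1] at e1 e2
  rw [Gst_Ginv hcν h2] at e3 e4
  rw [e1, e2, e3, e4]
  constructor <;> intro h <;> linarith

/-- `G_ρ(z)` is the strict minimum point: `E` is strictly decreasing before it and strictly increasing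
after it. -/
lemma Efun_lt (hnd : Nondeg μ) {z g : ℝ} (hz : z < aInf ρ) (hg : g ∈ varDom μ ν ρ z)
    (hne : g ≠ Gst ρ z) : Efun μ ν z (Gst ρ z) < Efun μ ν z g := by
  have hgz := Gst_mem_varDom hcν hcρ hsub hz
  have hD : ∀ x ∈ varDom μ ν ρ z, HasDerivAt (Efun μ ν z)
      (rder μ x * (x - Gst ν (z - (Ginv μ x + x⁻¹)))) x := fun x hx =>
    hasDerivAt_Efun hcμ hcν (hsub x hx.1).1 hx.2
  rcases hne.lt_or_gt with h | h
  · have hmem : ∀ x ∈ Icc g (Gst ρ z), x ∈ varDom μ ν ρ z := fun x hx =>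
      varDom_down hcμ hcρ hsub hgz ((gRange_pos hcρ hg.1).trans_le hx.1) hx.2
    refine strictAntiOn_of_deriv_neg (convex_Icc g (Gst ρ z))
      (fun x hx => (hD x (hmem x hx)).continuousAt.continuousWithinAt) (fun x hx => ?_)
      ⟨le_rfl, h.le⟩ ⟨h.le, le_rfl⟩ h
    rw [interior_Icc] at hx
    have hx' := hmem x (Ioo_subset_Icc_self hx)
    rw [(hD x hx').deriv]
    exact mul_neg_of_pos_of_neg (rder_pos hcμ hnd (hsub x hx'.1).1)
      (sub_neg.2 ((Gst_sub_sign hcν hcρ hsub hz hx').1 hx.2))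
  · have hmem : ∀ x ∈ Icc (Gst ρ z) g, x ∈ varDom μ ν ρ z := fun x hx =>
      varDom_down hcμ hcρ hsub hg ((gRange_pos hcρ hgz.1).trans_le hx.1) hx.2
    refine strictMonoOn_of_deriv_pos (convex_Icc (Gst ρ z) g)
      (fun x hx => (hD x (hmem x hx)).continuousAt.continuousWithinAt) (fun x hx => ?_)
      ⟨le_rfl, h.le⟩ ⟨h.le, le_rfl⟩ h
    rw [interior_Icc] at hx
    have hx' := hmem x (Ioo_subset_Icc_self hx)
    rw [(hD x hx').deriv]
    exact mul_pos (rder_pos hcμ hnd (hsub x hx'.1).1)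
      (sub_pos.2 ((Gst_sub_sign hcν hcρ hsub hz hx').2 hx.1))

omit hcν [IsProbabilityMeasure ν] in
lemma Ehat_inter_eq (z : ℝ) :
    Ehat μ ν z ∩ {g : ℝ | 0 < g ∧ (g : EReal) < GaSup ρ} = varDom μ ν ρ z := by
  ext g
  constructor
  · rintro ⟨⟨-, -, h⟩, h0, hg⟩
    rw [Rhat_neg] at h
    exact ⟨(lt_GaSup_iff hcρ h0).1 hg, h⟩
  · rintro ⟨hg, h⟩
    have h0 := gRange_pos hcρ hg
    rw [← Rhat_neg] at h
    exact ⟨⟨(neg_mem_Dhat_iff hcμ h0).2 (hsub g hg).1, h0.ne', h⟩, h0, (lt_GaSup_iff hcρ h0).2 hg⟩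

end

/-- variational formula for the logarithmic potential of the free additive
convolution, with the infimum attained exactly at `g = G_ρ(z)`. -/
theorem statement0 (μ ν ρ : MeasureTheory.Measure ℝ)
    [MeasureTheory.IsProbabilityMeasure μ] [MeasureTheory.IsProbabilityMeasure ν]
    (hcμ : HasCompactSupp μ) (hcν : HasCompactSupp ν) (hnd : Nondeg μ)
    (hρ : IsFreeAdd μ ν ρ) :
    ∀ z : ℝ, z < aInf ρ →
      Upot ρ z =
        sInf (Efun μ ν z '' (Ehat μ ν z ∩ {g : ℝ | 0 < g ∧ (g : EReal) < GaSup ρ})) ∧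
      Gst ρ z ∈ Ehat μ ν z ∩ {g : ℝ | 0 < g ∧ (g : EReal) < GaSup ρ} ∧
      Efun μ ν z (Gst ρ z) = Upot ρ z ∧
      ∀ g ∈ Ehat μ ν z ∩ {g : ℝ | 0 < g ∧ (g : EReal) < GaSup ρ},
        Efun μ ν z g = Upot ρ z → g = Gst ρ z := by
  intro z hz
  obtain ⟨hpρ, hcρ, ε, hε, hfree⟩ := hρ
  have hsub : ∀ g ∈ gRange ρ, g ∈ gRange μ ∧ g ∈ gRange ν ∧
      Ginv ρ g = Ginv μ g + Ginv ν g + g⁻¹ := by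
    refine fun g hg => gRange_subset hcμ hcν hcρ ⟨ε, hε, fun x hx => ?_⟩ hg
    obtain ⟨-, -, -, h⟩ := hfree (-x) ⟨by linarith [hx.2], by linarith [hx.1]⟩
      (neg_ne_zero.2 hx.1.ne')
    simp only [Rhat_neg] at h
    linarith
  rw [Ehat_inter_eq hcμ hcρ hsub z]
  have hmem := Gst_mem_varDom hcν hcρ hsub hz
  have hE := Efun_Gst hcμ hcν hcρ hsub hz
  have hlt : ∀ g ∈ varDom μ ν ρ z, g ≠ Gst ρ z → Upot ρ z < Efun μ ν z g := fun g hg hne =>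
    hE ▸ Efun_lt hcμ hcν hcρ hsub hnd hz hg hne
  refine ⟨?_, hmem, hE, fun g hg h => ?_⟩
  · have hleast : IsLeast (Efun μ ν z '' varDom μ ν ρ z) (Upot ρ z) := by
      refine ⟨⟨_, hmem, hE⟩, ?_⟩
      rintro _ ⟨g, hg, rfl⟩
      by_cases hne : g = Gst ρ z
      · rw [hne, hE]
      · exact (hlt g hg hne).le
    exact hleast.csInf_eq.symm
  · by_contra hne
    exact (hlt g hg hne).ne' h
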